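/- There is an absolute constant C > 0 such that for all real x ≥ 2, the number of ordered pairs of primes (p, q) with lcm(p−1, q−1) ≤ x is at most C·x. Equivalently, S_2(x) := (1/x)·Σ_{lcm(p−1,q−1) ≤ x} 1 ≤ C, where the sum is over ordered pairs of primes (p, q). -/

import Mathlib

open Filter Real

lemma crt_sum (a b : ℕ) (ha : 0 < a) (hb : 0 < b) (hab : Nat.Coprime a b) (F G : ℕ → ℝ)
    (hF : ∀ n, F (n % a) = F n) (hG : ∀ n, G (n % b) = G n) :
    ∑ n ∈ Finset.range (a * b), F n * G n
      = (∑ n ∈ Finset.range a, F n) * (∑ n ∈ Finset.range b, G n) := by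
  rw [Finset.sum_mul_sum, ← Finset.sum_product']
  have hinj : Set.InjOn (fun n : ℕ => (n % a, n % b)) (Finset.range (a * b) : Set ℕ) := by
    intro m hm n hn h
    simp only [Prod.mk.injEq] at h
    simp only [Finset.coe_range, Set.mem_Iio] at hm hn
    have h1 : m ≡ n [MOD a * b] := (Nat.modEq_and_modEq_iff_modEq_mul hab).1 ⟨h.1, h.2⟩
    exact Nat.ModEq.eq_of_lt_of_lt h1 hm hn
  have himg : (Finset.range (a * b)).image (fun n : ℕ => (n % a, n % b))
      = Finset.range a ×ˢ Finset.range b := by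
    apply Finset.eq_of_subset_of_card_le
    · intro z hz
      simp only [Finset.mem_image, Finset.mem_range] at hz
      obtain ⟨n, _, rfl⟩ := hz
      simp [Nat.mod_lt, ha, hb]
    · rw [Finset.card_image_of_injOn hinj]
      simp
  rw [← himg, Finset.sum_image hinj]
  apply Finset.sum_congr rfl
  intro n _
  simp only [hF, hG]

lemma prod_sum_crt (s : Finset ℕ) (hs : ∀ p ∈ s, p.Prime) (g : ℕ → ℕ → ℝ)
    (hg : ∀ p ∈ s, ∀ n, g p (n % p) = g p n) :
    ∑ n ∈ Finset.range (∏ p ∈ s, p), ∏ p ∈ s, g p n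
      = ∏ p ∈ s, ∑ n ∈ Finset.range p, g p n := by
  induction s using Finset.induction_on with
  | empty => simp
  | insert q s hq ih =>
    have hs' : ∀ p ∈ s, p.Prime := fun p hp => hs p (Finset.mem_insert_of_mem hp)
    have hg' : ∀ p ∈ s, ∀ n, g p (n % p) = g p n := fun p hp => hg p (Finset.mem_insert_of_mem hp)
    rw [Finset.prod_insert hq, Finset.prod_insert hq, ← ih hs' hg']
    simp_rw [Finset.prod_insert hq]
    apply crt_sum
    · exact (hs q (Finset.mem_insert_self _ _)).pos
    · exact Finset.prod_pos fun p hp => (hs' p hp).pos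
    · apply Nat.Coprime.prod_right
      intro p hp
      rw [Nat.coprime_primes (hs q (Finset.mem_insert_self _ _)) (hs' p hp)]
      rintro rfl
      exact hq hp
    · exact hg q (Finset.mem_insert_self _ _)
    · intro n
      apply Finset.prod_congr rfl
      intro p hp
      rw [← hg' p hp (n % _), ← hg' p hp n, Nat.mod_mod_of_dvd _ (Finset.dvd_prod_of_mem _ hp)]

lemma period_bound (f : ℕ → ℝ) (m : ℕ) (hm : 0 < m) (hf : ∀ n, f (n % m) = f n) (B : ℝ)
    (hB : ∀ n, |f n| ≤ B) (hs : 0 ≤ ∑ n ∈ Finset.range m, f n) (N : ℕ) :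
    ∑ n ∈ Finset.range N, f n ≤ N / m * (∑ n ∈ Finset.range m, f n) + m * B := by
  have hB0 : 0 ≤ B := (abs_nonneg _).trans (hB 0)
  have key : ∀ t : ℕ, ∑ n ∈ Finset.range (m * t), f n = t * ∑ n ∈ Finset.range m, f n := by
    intro t
    induction t with
    | zero => simp
    | succ t ih =>
      rw [Nat.mul_succ, Finset.sum_range_add, ih]
      have : ∑ x ∈ Finset.range m, f (m * t + x) = ∑ x ∈ Finset.range m, f x := by
        apply Finset.sum_congr rfl
        intro x _
        rw [← hf (m * t + x), ← hf x, Nat.mul_add_mod]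
      rw [this]; push_cast; ring
  conv_lhs => rw [← Nat.div_add_mod N m]
  rw [Finset.sum_range_add, key]
  apply add_le_add
  · apply mul_le_mul_of_nonneg_right Nat.cast_div_le hs
  · calc _ ≤ ∑ x ∈ Finset.range (N % m), B :=
        Finset.sum_le_sum fun x _ => (le_abs_self _).trans (hB _)
      _ = (N % m : ℕ) * B := by simp
      _ ≤ m * B := by
        apply mul_le_mul_of_nonneg_right _ hB0
        exact_mod_cast (Nat.mod_lt _ hm).le

lemma two_pow_card_le (q : ℕ) (hq : q ≠ 0) : (2 : ℝ) ^ q.primeFactors.card ≤ q := by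
  have h1 : 2 ^ q.primeFactors.card ≤ ∏ p ∈ q.primeFactors, p := by
    rw [← Finset.prod_const]
    exact Finset.prod_le_prod' fun p hp => (Nat.prime_of_mem_primeFactors hp).two_le
  have h2 := Nat.le_of_dvd (Nat.pos_of_ne_zero hq) (Nat.prod_primeFactors_dvd q)
  exact_mod_cast h1.trans h2

/-- local sieve weight -/
noncomputable def sw (k : ℕ) (F : ℕ → ℕ) (p n : ℕ) : ℝ :=
  open Classical in if p ∣ F n then -1 else (k : ℝ) / (p - k)

lemma sw_abs (k : ℕ) (hk : 1 ≤ k) (hk2 : k ≤ 2) (F : ℕ → ℕ) (p n : ℕ) (hp : k < p) :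
    |sw k F p n| ≤ 2 := by
  unfold sw
  have h0 : (1 : ℝ) ≤ p - k := by
    have : (k : ℝ) + 1 ≤ p := by exact_mod_cast hp
    linarith
  have hk' : (k : ℝ) ≤ 2 := by exact_mod_cast hk2
  split_ifs
  · norm_num
  · rw [abs_of_nonneg (by positivity)]
    rw [div_le_iff₀ (by linarith)]
    linarith

lemma sw_sum (k : ℕ) (F : ℕ → ℕ) (p : ℕ) (hp : k < p)
    (hc : ((Finset.range p).filter (fun n => p ∣ F n)).card = k) :
    ∑ n ∈ Finset.range p, sw k F p n = 0 := by
  classical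
  unfold sw
  have h0 : (p : ℝ) - k ≠ 0 := by
    have : (k : ℝ) < p := by exact_mod_cast hp
    linarith
  have hc2 : (((Finset.range p).filter (fun n => ¬ p ∣ F n)).card : ℝ) = p - k := by
    have := Finset.card_filter_add_card_filter_not (s := Finset.range p) (fun n => p ∣ F n)
    rw [hc, Finset.card_range] at this
    rw [eq_sub_iff_add_eq]; exact_mod_cast (by omega)
  rw [Finset.sum_ite]
  simp only [Finset.sum_const, nsmul_eq_mul]
  simp only [hc, hc2]
  field_simp
  ring

lemma sw_sum_sq (k : ℕ) (F : ℕ → ℕ) (p : ℕ) (hp : k < p)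
    (hc : ((Finset.range p).filter (fun n => p ∣ F n)).card = k) :
    ∑ n ∈ Finset.range p, sw k F p n * sw k F p n = p * ((k : ℝ) / (p - k)) := by
  classical
  unfold sw
  have h0 : (p : ℝ) - k ≠ 0 := by
    have : (k : ℝ) < p := by exact_mod_cast hp
    linarith
  have hc2 : (((Finset.range p).filter (fun n => ¬ p ∣ F n)).card : ℝ) = p - k := by
    have := Finset.card_filter_add_card_filter_not (s := Finset.range p) (fun n => p ∣ F n)
    rw [hc, Finset.card_range] at this
    rw [eq_sub_iff_add_eq]; exact_mod_cast (by omega)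
  have : ∀ n, (if p ∣ F n then (-1 : ℝ) else (k : ℝ) / (p - k)) *
     (if p ∣ F n then (-1 : ℝ) else (k : ℝ) / (p - k)) =
      if p ∣ F n then (1 : ℝ) else ((k : ℝ) / (p - k)) ^ 2 := by
    intro n; split_ifs <;> ring
  simp only [this]
  rw [Finset.sum_ite]
  simp only [Finset.sum_const, nsmul_eq_mul]
  simp only [hc, hc2]
  field_simp
  ring

lemma sw_corr (k : ℕ) (hk : 1 ≤ k) (hk2 : k ≤ 2) (F : ℕ → ℕ) (q r Q N : ℕ)
    (hq : Squarefree q) (hr : Squarefree r) (hqQ : q ≤ Q) (hrQ : r ≤ Q)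
    (hpq : ∀ p ∈ q.primeFactors ∪ r.primeFactors, k < p ∧ (∀ n, p ∣ F (n % p) ↔ p ∣ F n) ∧
      ((Finset.range p).filter (fun n => p ∣ F n)).card = k) :
    ∑ n ∈ Finset.range N, (∏ p ∈ q.primeFactors, sw k F p n) * (∏ p ∈ r.primeFactors, sw k F p n)
      ≤ (if q = r then N * ∏ p ∈ q.primeFactors, ((k : ℝ) / (p - k)) else 0) + (Q : ℝ) ^ 4 := by
  classical
  set s := q.primeFactors ∪ r.primeFactors with hs
  set g : ℕ → ℕ → ℝ := fun p n => (if p ∈ q.primeFactors then sw k F p n else 1) *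
    (if p ∈ r.primeFactors then sw k F p n else 1) with hgdef
  have hq0 := hq.ne_zero
  have hr0 := hr.ne_zero
  have hfg : ∀ n, (∏ p ∈ q.primeFactors, sw k F p n) * (∏ p ∈ r.primeFactors, sw k F p n)
      = ∏ p ∈ s, g p n := by
    intro n
    simp only [hgdef, Finset.prod_mul_distrib, Finset.prod_ite_mem]
    congr 2
    · rw [Finset.inter_eq_right.2 Finset.subset_union_left]
    · rw [Finset.inter_eq_right.2 Finset.subset_union_right]
  have hsp : ∀ p ∈ s, p.Prime := by
    intro p hp
    rcases Finset.mem_union.1 hp with h | h <;> exact Nat.prime_of_mem_primeFactors h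
  have hper : ∀ p ∈ s, ∀ n, sw k F p (n % p) = sw k F p n := by
    intro p hp n
    unfold sw
    simp only [(hpq p hp).2.1 n]
  have hgper : ∀ p ∈ s, ∀ n, g p (n % p) = g p n := by
    intro p hp n
    simp only [hgdef, hper p hp n]
  set m := ∏ p ∈ s, p with hm
  have hm0 : 0 < m := Finset.prod_pos fun p hp => (hsp p hp).pos
  have hmle : m ≤ q * r := by
    have h1 : m ∣ q * r := by
      rw [hm, hs, ← Nat.primeFactors_mul hq0 hr0]
      exact Nat.prod_primeFactors_dvd _
    exact Nat.le_of_dvd (by positivity) h1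
  have hcrt := prod_sum_crt s hsp g hgper
  have hval : ∑ n ∈ Finset.range m, ∏ p ∈ s, g p n =
      if q = r then m * ∏ p ∈ q.primeFactors, ((k : ℝ) / (p - k)) else 0 := by
    rw [hcrt]
    split_ifs with h
    · subst h
      rw [hm]; push_cast
      have hsq : s = q.primeFactors := by simp [hs]
      rw [hsq, ← Finset.prod_mul_distrib]
      apply Finset.prod_congr rfl
      intro p hp
      simp only [hgdef, if_pos hp]
      have h3 := hpq p (by rw [hsq]; exact hp)
      exact sw_sum_sq k F p h3.1 h3.2.2
    · have : q.primeFactors ≠ r.primeFactors := by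
        intro he
        apply h
        rw [← Nat.prod_primeFactors_of_squarefree hq, he, Nat.prod_primeFactors_of_squarefree hr]
      have : ∃ p, (p ∈ q.primeFactors ∧ p ∉ r.primeFactors) ∨
          (p ∉ q.primeFactors ∧ p ∈ r.primeFactors) := by
        by_contra! hc
        apply this
        ext p
        have := hc p
        tauto
      obtain ⟨p, hp⟩ := this
      have hps : p ∈ s := by rw [hs, Finset.mem_union]; tauto
      apply Finset.prod_eq_zero hps
      have h3 := hpq p hps
      have h4 := sw_sum k F p h3.1 h3.2.2
      rcases hp with hp | hp
      · simp only [hgdef, if_pos hp.1, if_neg hp.2, mul_one, h4]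
      · simp only [hgdef, if_pos hp.2, if_neg hp.1, one_mul, h4]
  have hbd : ∀ n, |∏ p ∈ s, g p n| ≤ (q : ℝ) * r := by
    intro n
    rw [← hfg, abs_mul, Finset.abs_prod, Finset.abs_prod]
    have h1 : ∏ p ∈ q.primeFactors, |sw k F p n| ≤ q := by
      refine le_trans ?_ (two_pow_card_le q hq0)
      rw [← Finset.prod_const]
      refine Finset.prod_le_prod (fun _ _ => abs_nonneg _) fun p hp => ?_
      exact sw_abs k hk hk2 F p n (hpq p (Finset.mem_union_left _ hp)).1
    have h2 : ∏ p ∈ r.primeFactors, |sw k F p n| ≤ r := by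
      refine le_trans ?_ (two_pow_card_le r hr0)
      rw [← Finset.prod_const]
      refine Finset.prod_le_prod (fun _ _ => abs_nonneg _) fun p hp => ?_
      exact sw_abs k hk hk2 F p n (hpq p (Finset.mem_union_right _ hp)).1
    exact mul_le_mul h1 h2 (Finset.prod_nonneg fun _ _ => abs_nonneg _) (Nat.cast_nonneg _)
  have hnn : 0 ≤ ∑ n ∈ Finset.range m, ∏ p ∈ s, g p n := by
    rw [hval]
    split_ifs
    · apply mul_nonneg (Nat.cast_nonneg _)
      apply Finset.prod_nonneg
      intro p hp
      have : (k : ℝ) < p := by exact_mod_cast (hpq p (Finset.mem_union_left _ hp)).1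
      apply div_nonneg (Nat.cast_nonneg _); linarith
    · exact le_rfl
  have hfper : ∀ n, (∏ p ∈ s, g p (n % m)) = ∏ p ∈ s, g p n := by
    intro n
    apply Finset.prod_congr rfl
    intro p hp
    rw [← hgper p hp (n % _), ← hgper p hp n, Nat.mod_mod_of_dvd _ (Finset.dvd_prod_of_mem _ hp)]
  have := period_bound (fun n => ∏ p ∈ s, g p n) m hm0 hfper _ hbd hnn N
  simp only [hfg]
  refine this.trans ?_
  rw [hval]
  have hm0' : (m : ℝ) ≠ 0 := by positivity
  apply add_le_add
  · apply le_of_eq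
    split_ifs
    · field_simp
    · simp
  · have h1 : (m : ℝ) ≤ q * r := by exact_mod_cast hmle
    have h2 : (q : ℝ) ≤ Q := by exact_mod_cast hqQ
    have h3 : (r : ℝ) ≤ Q := by exact_mod_cast hrQ
    have h4 : (q : ℝ) * r ≤ Q * Q := by gcongr
    calc (m : ℝ) * (q * r) ≤ (Q * Q) * (Q * Q) := by
          apply mul_le_mul (h1.trans h4) h4 <;> positivity
      _ = _ := by ring

theorem sieve_main (k : ℕ) (hk : 1 ≤ k) (hk2 : k ≤ 2) (F : ℕ → ℕ) (D : Finset ℕ) (Q N : ℕ)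
    (hD : ∀ q ∈ D, Squarefree q ∧ q ≤ Q ∧ ∀ p ∈ q.primeFactors, k < p ∧
      (∀ n, p ∣ F (n % p) ↔ p ∣ F n) ∧ ((Finset.range p).filter (fun n => p ∣ F n)).card = k)
    (h1 : 1 ∈ D) (S : Finset ℕ)
    (hS : ∀ n ∈ S, n < N ∧ ∀ q ∈ D, ∀ p ∈ q.primeFactors, ¬ p ∣ F n) :
    (S.card : ℝ) * (∑ q ∈ D, ∏ p ∈ q.primeFactors, ((k : ℝ) / (p - k))) ≤ N + (Q : ℝ) ^ 6 := by
  classical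
  set L := ∑ q ∈ D, ∏ p ∈ q.primeFactors, ((k : ℝ) / (p - k)) with hL
  set T : ℕ → ℝ := fun n => ∑ q ∈ D, ∏ p ∈ q.primeFactors, sw k F p n with hT
  have hnn : ∀ q ∈ D, 0 ≤ ∏ p ∈ q.primeFactors, ((k : ℝ) / (p - k)) := by
    intro q hq
    apply Finset.prod_nonneg
    intro p hp
    have : (k : ℝ) < p := by exact_mod_cast ((hD q hq).2.2 p hp).1
    apply div_nonneg (Nat.cast_nonneg _); linarith
  have hL1 : 1 ≤ L := by
    have := Finset.single_le_sum hnn h1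
    rw [Nat.primeFactors_one, Finset.prod_empty] at this
    exact this
  have hTS : ∀ n ∈ S, T n = L := by
    intro n hn
    apply Finset.sum_congr rfl
    intro q hq
    apply Finset.prod_congr rfl
    intro p hp
    unfold sw
    rw [if_neg ((hS n hn).2 q hq p hp)]
  have hA : (S.card : ℝ) * L ^ 2 ≤ ∑ n ∈ Finset.range N, T n ^ 2 := by
    calc (S.card : ℝ) * L ^ 2 = ∑ n ∈ S, T n ^ 2 := by
          rw [Finset.sum_congr rfl fun n hn => by rw [hTS n hn]]
          simp
      _ ≤ _ := by
          apply Finset.sum_le_sum_of_subset_of_nonneg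
          · intro n hn; exact Finset.mem_range.2 (hS n hn).1
          · intros; positivity
  have hcard : (D.card : ℝ) ≤ Q := by
    have : D ⊆ Finset.Icc 1 Q := by
      intro q hq
      rw [Finset.mem_Icc]
      exact ⟨Nat.pos_of_ne_zero (hD q hq).1.ne_zero, (hD q hq).2.1⟩
    have := Finset.card_le_card this
    rw [Nat.card_Icc] at this
    exact_mod_cast (by omega)
  have hB : ∑ n ∈ Finset.range N, T n ^ 2 ≤ N * L + (Q : ℝ) ^ 6 := by
    have e1 : ∑ n ∈ Finset.range N, T n ^ 2 = ∑ q ∈ D, ∑ r ∈ D, ∑ n ∈ Finset.range N,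
        (∏ p ∈ q.primeFactors, sw k F p n) * (∏ p ∈ r.primeFactors, sw k F p n) := by
      simp only [hT, sq, Finset.sum_mul_sum]
      rw [Finset.sum_comm]
      apply Finset.sum_congr rfl
      intro q _
      rw [Finset.sum_comm]
    rw [e1]
    calc _ ≤ ∑ q ∈ D, ∑ r ∈ D, ((if q = r then N * ∏ p ∈ q.primeFactors, ((k : ℝ) / (p - k))
            else 0) + (Q : ℝ) ^ 4) := by
          refine Finset.sum_le_sum fun q hq => Finset.sum_le_sum fun r hr => ?_
          apply sw_corr k hk hk2 F q r Q N (hD q hq).1 (hD r hr).1 (hD q hq).2.1 (hD r hr).2.1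
          intro p hp
          rcases Finset.mem_union.1 hp with h | h
          · exact (hD q hq).2.2 p h
          · exact (hD r hr).2.2 p h
      _ = N * L + (D.card : ℝ) * D.card * (Q : ℝ) ^ 4 := by
          simp only [Finset.sum_add_distrib, Finset.sum_ite_eq, Finset.sum_const, nsmul_eq_mul]
          rw [hL, Finset.mul_sum]
          congr 1
          · apply Finset.sum_congr rfl
            intro q hq
            rw [if_pos hq]
          · ring
      _ ≤ N * L + (Q : ℝ) * Q * (Q : ℝ) ^ 4 := by gcongr
      _ = _ := by ring
  have hC : (S.card : ℝ) * L * L ≤ (N + (Q : ℝ) ^ 6) * L := by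
    have : (Q : ℝ) ^ 6 ≤ (Q : ℝ) ^ 6 * L := le_mul_of_one_le_right (by positivity) hL1
    nlinarith
  exact le_of_mul_le_mul_right hC (by linarith)

/-- `∏ (1 + k/p)` over primes dividing `n` -/
noncomputable def GG (k n : ℕ) : ℝ := ∏ p ∈ n.primeFactors, (1 + (k : ℝ) / p)

/-- `∏ k/p` over primes dividing `n` -/
noncomputable def cc (k n : ℕ) : ℝ := ∏ p ∈ n.primeFactors, ((k : ℝ) / p)

lemma sum_le_of_inj {α β : Type*} (A : Finset α) (B : Finset β) (i : α → β)
    (hi : ∀ a ∈ A, i a ∈ B) (hinj : ∀ a ∈ A, ∀ b ∈ A, i a = i b → a = b) (f : α → ℝ) (g : β → ℝ)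
    (hfg : ∀ a ∈ A, f a ≤ g (i a)) (hg : ∀ b ∈ B, 0 ≤ g b) :
    ∑ a ∈ A, f a ≤ ∑ b ∈ B, g b := by
  classical
  calc ∑ a ∈ A, f a ≤ ∑ a ∈ A, g (i a) := Finset.sum_le_sum hfg
    _ = ∑ b ∈ A.image i, g b := by
        rw [Finset.sum_image]
        intro a ha b hb h
        exact hinj a ha b hb h
    _ ≤ _ := by
        apply Finset.sum_le_sum_of_subset_of_nonneg
        · intro b hb
          obtain ⟨a, ha, rfl⟩ := Finset.mem_image.1 hb
          exact hi a ha
        · intro b hb _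
          exact hg b hb

lemma sum_sqfree_divisors (n : ℕ) (hn : n ≠ 0) (f : ℕ → ℝ) :
    ∑ e ∈ n.divisors.filter Squarefree, ∏ p ∈ e.primeFactors, f p
      = ∏ p ∈ n.primeFactors, (1 + f p) := by
  classical
  rw [Finset.prod_one_add]
  have hpr : ∀ s ∈ n.primeFactors.powerset, ∀ p ∈ s, p.Prime := by
    intro s hs p hp
    exact Nat.prime_of_mem_primeFactors (Finset.mem_powerset.1 hs hp)
  refine Finset.sum_nbij' (fun e => e.primeFactors) (fun s => ∏ p ∈ s, p) ?_ ?_ ?_ ?_ ?_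
  · intro e he
    simp only [Finset.mem_filter, Nat.mem_divisors] at he
    rw [Finset.mem_powerset]
    exact Nat.primeFactors_mono he.1.1 hn
  · intro s hs
    rw [Finset.mem_filter, Nat.mem_divisors]
    refine ⟨⟨?_, hn⟩, ?_⟩
    · exact (Finset.prod_dvd_prod_of_subset _ _ _ (Finset.mem_powerset.1 hs)).trans
        (Nat.prod_primeFactors_dvd n)
    · apply Finset.squarefree_prod_of_pairwise_isCoprime
      · intro p hp q hq hpq
        rw [Function.onFun, ← Nat.coprime_iff_isRelPrime]
        exact (Nat.coprime_primes (hpr s hs p hp) (hpr s hs q hq)).2 hpq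
      · intro p hp
        exact (hpr s hs p hp).squarefree
  · intro e he
    simp only [Finset.mem_filter] at he
    exact Nat.prod_primeFactors_of_squarefree he.2
  · intro s hs
    exact Nat.primeFactors_prod (hpr s hs)
  · intro e _
    rfl

lemma cc_nonneg (k n : ℕ) : 0 ≤ cc k n := Finset.prod_nonneg fun _ _ => by positivity

lemma GG_one_le (k n : ℕ) : 1 ≤ GG k n := by
  unfold GG
  refine Finset.prod_induction _ (fun x : ℝ => 1 ≤ x)
    (fun a b ha hb => one_le_mul_of_one_le_of_one_le ha hb) le_rfl fun p _ => ?_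
  have : 0 ≤ (k : ℝ) / p := by positivity
  linarith

lemma GG_nonneg (k n : ℕ) : 0 ≤ GG k n := zero_le_one.trans (GG_one_le k n)

lemma GG_eq (k n : ℕ) (hn : n ≠ 0) : GG k n = ∑ e ∈ n.divisors.filter Squarefree, cc k e :=
  (sum_sqfree_divisors n hn fun p => (k : ℝ) / p).symm

lemma GG_mul_le (k m n : ℕ) (hm : m ≠ 0) (hn : n ≠ 0) : GG k (m * n) ≤ GG k m * GG k n := by
  classical
  unfold GG
  rw [Nat.primeFactors_mul hm hn, ← Finset.prod_union_inter]
  apply le_mul_of_one_le_right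
  · exact Finset.prod_nonneg fun _ _ => by positivity
  · refine Finset.prod_induction _ (fun x : ℝ => 1 ≤ x)
      (fun a b ha hb => one_le_mul_of_one_le_of_one_le ha hb) le_rfl fun p _ => ?_
    have : 0 ≤ (k : ℝ) / p := by positivity
    linarith

lemma GG_cube (n : ℕ) : GG 2 n ^ 3 ≤ GG 26 n := by
  unfold GG
  rw [← Finset.prod_pow]
  apply Finset.prod_le_prod (fun _ _ => by positivity)
  intro p hp
  have hp1 : (1 : ℝ) ≤ p := by exact_mod_cast (Nat.prime_of_mem_primeFactors hp).one_le
  have h0 : 0 ≤ 1 / (p : ℝ) := by positivity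
  have h1 : 1 / (p : ℝ) ≤ 1 := by rw [div_le_one (by linarith)]; exact hp1
  push_cast
  rw [div_eq_mul_one_div (2 : ℝ), div_eq_mul_one_div (26 : ℝ)]
  generalize 1 / (p : ℝ) = t at *
  nlinarith [mul_nonneg h0 (sub_nonneg.2 h1), mul_nonneg (mul_nonneg h0 h0) (sub_nonneg.2 h1)]

lemma cc_mul (k m n : ℕ) (h : Nat.Coprime m n) : cc k (m * n) = cc k m * cc k n := by
  unfold cc
  rw [h.primeFactors_mul, Finset.prod_union h.disjoint_primeFactors]

lemma cc_sqfree (k n : ℕ) (h : Squarefree n) : cc k n = (k : ℝ) ^ n.primeFactors.card / n := by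
  unfold cc
  rw [Finset.prod_div_distrib, Finset.prod_const]
  congr 1
  rw [← Nat.cast_prod, Nat.prod_primeFactors_of_squarefree h]

lemma coprime_div_gcd_of_sqfree (q E : ℕ) (h : Squarefree q) :
    Nat.Coprime (q / Nat.gcd q E) E ∧ Nat.Coprime (Nat.gcd q E) (q / Nat.gcd q E) := by
  have h1 : Nat.gcd q E * (q / Nat.gcd q E) = q := Nat.mul_div_cancel' (Nat.gcd_dvd_left _ _)
  have h2 : Nat.Coprime (Nat.gcd q E) (q / Nat.gcd q E) := by
    apply Nat.coprime_of_squarefree_mul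
    rw [h1]; exact h
  refine ⟨?_, h2⟩
  rw [Nat.coprime_iff_gcd_eq_one]
  have h3 : Nat.gcd (q / Nat.gcd q E) E ∣ Nat.gcd q E :=
    Nat.dvd_gcd ((Nat.gcd_dvd_left _ _).trans (Nat.div_dvd_of_dvd (Nat.gcd_dvd_left _ _)))
      (Nat.gcd_dvd_right _ _)
  exact Nat.eq_one_of_dvd_coprimes h2 h3 (Nat.gcd_dvd_left _ _)

lemma M_le (k Q E : ℕ) (hE : E ≠ 0) :
    ∑ q ∈ (Finset.Icc 1 Q).filter Squarefree, cc k q ≤ GG k E *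
      ∑ q ∈ (Finset.Icc 1 Q).filter (fun q => Squarefree q ∧ Nat.Coprime q E), cc k q := by
  rw [GG_eq k E hE, Finset.sum_mul_sum, ← Finset.sum_product']
  apply sum_le_of_inj _ _ (fun q => (Nat.gcd q E, q / Nat.gcd q E))
  · intro q hq
    simp only [Finset.mem_filter, Finset.mem_Icc] at hq
    have hc := coprime_div_gcd_of_sqfree q E hq.2
    have hg0 : 0 < Nat.gcd q E := Nat.gcd_pos_of_pos_left _ (by omega)
    have hdv : q / Nat.gcd q E ∣ q := Nat.div_dvd_of_dvd (Nat.gcd_dvd_left _ _)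
    simp only [Finset.mem_product, Finset.mem_filter, Finset.mem_Icc, Nat.mem_divisors]
    refine ⟨⟨⟨Nat.gcd_dvd_right _ _, hE⟩, hq.2.squarefree_of_dvd (Nat.gcd_dvd_left _ _)⟩,
      ⟨?_, ?_⟩, hq.2.squarefree_of_dvd hdv, hc.1⟩
    · exact Nat.div_pos (Nat.le_of_dvd (by omega) (Nat.gcd_dvd_left _ _)) hg0
    · exact (Nat.div_le_self _ _).trans hq.1.2
  · intro q _ r _ h
    simp only [Prod.mk.injEq] at h
    rw [← Nat.mul_div_cancel' (Nat.gcd_dvd_left q E), h.2, h.1,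
      Nat.mul_div_cancel' (Nat.gcd_dvd_left r E)]
  · intro q hq
    simp only [Finset.mem_filter, Finset.mem_Icc] at hq
    have hc := coprime_div_gcd_of_sqfree q E hq.2
    simp only
    rw [← cc_mul _ _ _ hc.2, Nat.mul_div_cancel' (Nat.gcd_dvd_left _ _)]
  · intro b _
    exact mul_nonneg (cc_nonneg _ _) (cc_nonneg _ _)

lemma sum_inv_sq (Q : ℕ) : ∑ m ∈ Finset.Icc 1 Q, (1 : ℝ) / (m : ℝ) ^ 2 ≤ 2 := by
  have : ∀ Q : ℕ, ∑ m ∈ Finset.Icc 1 (Q + 1), (1 : ℝ) / (m : ℝ) ^ 2 ≤ 2 - 1 / ((Q : ℝ) + 1) := by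
    intro Q
    induction Q with
    | zero => norm_num
    | succ Q ih =>
      rw [Finset.sum_Icc_succ_top (by omega)]
      have : (1 : ℝ) / (((Q + 1 + 1 : ℕ) : ℝ)) ^ 2 ≤ 1 / ((Q : ℝ) + 1) - 1 / ((Q : ℝ) + 1 + 1) := by
        push_cast
        rw [div_sub_div _ _ (by positivity) (by positivity)]
        rw [div_le_div_iff₀ (by positivity) (by positivity)]
        have : (0 : ℝ) ≤ Q := by positivity
        nlinarith
      push_cast at this ⊢
      linarith
  rcases Q with _ | Q
  · norm_num
  · have h := this Q
    have : 0 ≤ 1 / ((Q : ℝ) + 1) := by positivity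
    linarith

lemma log_le_M1 (Q : ℕ) : Real.log (Q + 1) ≤
    2 * ∑ q ∈ (Finset.Icc 1 Q).filter Squarefree, cc 1 q := by
  have h1 : Real.log (Q + 1) ≤ ∑ n ∈ Finset.Icc 1 Q, (1 : ℝ) / n := by
    have := log_add_one_le_harmonic Q
    rw [harmonic_eq_sum_Icc] at this
    push_cast at this
    simpa using this
  refine h1.trans ?_
  refine le_trans ?_ (mul_le_mul_of_nonneg_right (sum_inv_sq Q)
    (Finset.sum_nonneg fun _ _ => cc_nonneg _ _))
  rw [Finset.sum_mul_sum, ← Finset.sum_product']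
  choose u v huv hu using fun n : ℕ => Nat.sq_mul_squarefree n
  apply sum_le_of_inj _ _ (fun n => (v n, u n))
  · intro n hn
    rw [Finset.mem_Icc] at hn
    have hpos : 0 < v n ^ 2 * u n := by rw [huv]; omega
    have hu0 : 0 < u n := Nat.pos_of_mul_pos_left hpos
    have hv0 : 0 < v n := by
      rcases Nat.eq_zero_or_pos (v n) with h | h
      · rw [h] at hpos; simp at hpos
      · exact h
    have h2 := huv n
    simp only [Finset.mem_product, Finset.mem_filter, Finset.mem_Icc]
    have h3 : v n ≤ n := by nlinarith
    have h4 : u n ≤ n := by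
      conv_rhs => rw [← huv n]
      exact Nat.le_mul_of_pos_left _ (by positivity)
    refine ⟨⟨hv0, by omega⟩, ⟨hu0, by omega⟩, hu n⟩
  · intro m _ n _ h
    simp only [Prod.mk.injEq] at h
    rw [← huv m, ← huv n, h.1, h.2]
  · intro n _
    simp only
    rw [cc_sqfree _ _ (hu n)]
    conv_lhs => rw [← huv n]
    apply le_of_eq
    push_cast
    simp [mul_comm]
  · intro b _
    exact mul_nonneg (by positivity) (cc_nonneg _ _)

lemma M1_sq_le (Q : ℕ) : (∑ q ∈ (Finset.Icc 1 Q).filter Squarefree, cc 1 q) ^ 2 ≤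
    2 * ∑ q ∈ (Finset.Icc 1 (Q ^ 2)).filter Squarefree, cc 2 q := by
  have hM2 : ∑ q ∈ (Finset.Icc 1 (Q ^ 2)).filter Squarefree, cc 2 q
      = ∑ z ∈ ((Finset.Icc 1 (Q ^ 2)).filter Squarefree).sigma (fun q => q.divisors),
          (1 : ℝ) / z.1 := by
    rw [Finset.sum_sigma]
    apply Finset.sum_congr rfl
    intro q hq
    simp only [Finset.mem_filter, Finset.mem_Icc] at hq
    have h := sum_sqfree_divisors q hq.2.ne_zero fun _ => 1
    simp only [Finset.prod_const_one, Finset.prod_const] at h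
    rw [Finset.filter_true_of_mem] at h
    · rw [cc_sqfree _ _ hq.2]
      simp only [Finset.sum_const, nsmul_eq_mul, mul_one] at h ⊢
      rw [h]
      norm_num [div_eq_mul_inv]
    · intro e he
      exact hq.2.squarefree_of_dvd (Nat.dvd_of_mem_divisors he)
  rw [hM2]
  refine le_trans ?_ (mul_le_mul_of_nonneg_right (sum_inv_sq Q)
    (Finset.sum_nonneg fun _ _ => by positivity))
  rw [sq, Finset.sum_mul_sum, ← Finset.sum_product', Finset.sum_mul_sum, ← Finset.sum_product']
  apply sum_le_of_inj _ _ (fun z : ℕ × ℕ => (Nat.gcd z.1 z.2,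
    (⟨(z.1 / Nat.gcd z.1 z.2) * (z.2 / Nat.gcd z.1 z.2), z.1 / Nat.gcd z.1 z.2⟩ : (_ : ℕ) × ℕ)))
  · rintro ⟨u, v⟩ hz
    simp only [Finset.mem_product, Finset.mem_filter, Finset.mem_Icc] at hz
    obtain ⟨⟨⟨hu1, huQ⟩, hus⟩, ⟨hv1, hvQ⟩, hvs⟩ := hz
    have hg0 : 0 < Nat.gcd u v := Nat.gcd_pos_of_pos_left _ hu1
    have hgu : Nat.gcd u v ≤ u := Nat.le_of_dvd hu1 (Nat.gcd_dvd_left _ _)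
    have hgv : Nat.gcd u v ≤ v := Nat.le_of_dvd hv1 (Nat.gcd_dvd_right _ _)
    have a1 : 0 < u / Nat.gcd u v := Nat.div_pos hgu hg0
    have a2 : 0 < v / Nat.gcd u v := Nat.div_pos hgv hg0
    have b1 : u / Nat.gcd u v ≤ Q := (Nat.div_le_self _ _).trans huQ
    have b2 : v / Nat.gcd u v ≤ Q := (Nat.div_le_self _ _).trans hvQ
    simp only [Finset.mem_product, Finset.mem_sigma, Finset.mem_filter, Finset.mem_Icc,
      Nat.mem_divisors]
    refine ⟨⟨hg0, hgu.trans huQ⟩, ⟨⟨Nat.mul_pos a1 a2, ?_⟩, ?_⟩, Dvd.intro _ rfl,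
      (Nat.mul_pos a1 a2).ne'⟩
    · rw [sq]; exact Nat.mul_le_mul b1 b2
    · rw [Nat.squarefree_mul (Nat.coprime_div_gcd_div_gcd hg0)]
      exact ⟨hus.squarefree_of_dvd (Nat.div_dvd_of_dvd (Nat.gcd_dvd_left _ _)),
        hvs.squarefree_of_dvd (Nat.div_dvd_of_dvd (Nat.gcd_dvd_right _ _))⟩
  · rintro ⟨u, v⟩ hz ⟨u', v'⟩ hz' h
    simp only [Finset.mem_product, Finset.mem_filter, Finset.mem_Icc] at hz hz'
    simp only [Prod.mk.injEq, Sigma.mk.injEq, heq_eq_eq] at h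
    obtain ⟨h1, h2, h3⟩ := h
    have hg0 : 0 < Nat.gcd u v := Nat.gcd_pos_of_pos_left _ hz.1.1.1
    have a1 : 0 < u / Nat.gcd u v :=
      Nat.div_pos (Nat.le_of_dvd hz.1.1.1 (Nat.gcd_dvd_left _ _)) hg0
    have h4 : v / Nat.gcd u v = v' / Nat.gcd u' v' := by
      rw [← h3] at h2
      exact Nat.eq_of_mul_eq_mul_left a1 h2
    have e1 := Nat.mul_div_cancel' (Nat.gcd_dvd_left u v)
    have e2 := Nat.mul_div_cancel' (Nat.gcd_dvd_left u' v')
    have e3 := Nat.mul_div_cancel' (Nat.gcd_dvd_right u v)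
    have e4 := Nat.mul_div_cancel' (Nat.gcd_dvd_right u' v')
    rw [h3, h1, e2] at e1
    rw [h4, h1, e4] at e3
    rw [e1, e3]
  · rintro ⟨u, v⟩ hz
    simp only [Finset.mem_product, Finset.mem_filter, Finset.mem_Icc] at hz
    have hg0 : 0 < Nat.gcd u v := Nat.gcd_pos_of_pos_left _ hz.1.1.1
    simp only
    rw [cc_sqfree _ _ hz.1.2, cc_sqfree _ _ hz.2.2]
    have e1 := Nat.mul_div_cancel' (Nat.gcd_dvd_left u v)
    have e3 := Nat.mul_div_cancel' (Nat.gcd_dvd_right u v)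
    generalize u / Nat.gcd u v = u' at *
    generalize v / Nat.gcd u v = v' at *
    generalize Nat.gcd u v = g at *
    subst e1 e3
    apply le_of_eq
    push_cast
    simp only [one_pow, one_div, mul_inv_rev]
    ring
  · intro b _
    positivity

lemma sum_cc_div (K N : ℕ) :
    ∑ e ∈ (Finset.Icc 1 N).filter Squarefree, cc K e / e ≤ Real.exp (2 * K) := by
  have hN : N.factorial ≠ 0 := Nat.factorial_ne_zero N
  calc _ ≤ ∑ e ∈ N.factorial.divisors.filter Squarefree,
        ∏ p ∈ e.primeFactors, ((K : ℝ) / p ^ 2) := by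
        apply sum_le_of_inj _ _ id
        · intro e he
          simp only [Finset.mem_filter, Finset.mem_Icc, Nat.mem_divisors, id] at he ⊢
          exact ⟨⟨Nat.dvd_factorial he.1.1 he.1.2, hN⟩, he.2⟩
        · intro a _ b _ h; exact h
        · intro e he
          simp only [Finset.mem_filter] at he
          simp only [id]
          rw [cc_sqfree _ _ he.2, Finset.prod_div_distrib, Finset.prod_const, Finset.prod_pow,
            ← Nat.cast_prod, Nat.prod_primeFactors_of_squarefree he.2, div_div, sq]
        · intro e _
          exact Finset.prod_nonneg fun _ _ => by positivity
    _ = ∏ p ∈ N.factorial.primeFactors, (1 + (K : ℝ) / p ^ 2) := sum_sqfree_divisors _ hN _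
    _ ≤ ∏ p ∈ N.factorial.primeFactors, Real.exp ((K : ℝ) / p ^ 2) := by
        apply Finset.prod_le_prod (fun _ _ => by positivity)
        intro p _
        rw [add_comm]; exact Real.add_one_le_exp _
    _ = Real.exp (∑ p ∈ N.factorial.primeFactors, (K : ℝ) / p ^ 2) := (Real.exp_sum _ _).symm
    _ ≤ _ := by
        rw [Real.exp_le_exp]
        calc _ ≤ ∑ p ∈ Finset.Icc 1 N, (K : ℝ) / p ^ 2 := by
              apply Finset.sum_le_sum_of_subset_of_nonneg
              · intro p hp
                have hpp := Nat.prime_of_mem_primeFactors hp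
                rw [Finset.mem_Icc]
                exact ⟨hpp.one_le, (hpp.dvd_factorial).1 (Nat.dvd_of_mem_primeFactors hp)⟩
              · intros; positivity
          _ = K * ∑ p ∈ Finset.Icc 1 N, (1 : ℝ) / p ^ 2 := by
              rw [Finset.mul_sum]
              apply Finset.sum_congr rfl
              intros; ring
          _ ≤ K * 2 := by gcongr; exact sum_inv_sq N
          _ = _ := by ring

lemma sum_inv_le (N : ℕ) : ∑ n ∈ Finset.Icc 1 N, (1 : ℝ) / n ≤ 1 + Real.log N := by
  have := harmonic_le_one_add_log N
  rw [harmonic_eq_sum_Icc] at this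
  push_cast at this
  simpa using this

lemma sum_GG_div (K N : ℕ) :
    ∑ n ∈ Finset.Icc 1 N, GG K n / n ≤ Real.exp (2 * K) * (1 + Real.log N) := by
  have h1 : ∑ n ∈ Finset.Icc 1 N, GG K n / n = ∑ z ∈ (Finset.Icc 1 N).sigma
      (fun n => n.divisors.filter Squarefree), cc K z.2 / z.1 := by
    rw [Finset.sum_sigma]
    apply Finset.sum_congr rfl
    intro n hn
    rw [Finset.mem_Icc] at hn
    rw [GG_eq K n (by omega), Finset.sum_div]
  rw [h1]
  refine le_trans ?_ (mul_le_mul (sum_cc_div K N) (sum_inv_le N)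
    (Finset.sum_nonneg fun _ _ => by positivity) (Real.exp_pos _).le)
  rw [Finset.sum_mul_sum, ← Finset.sum_product']
  apply sum_le_of_inj _ _ (fun z : (_ : ℕ) × ℕ => (z.2, z.1 / z.2))
  · rintro ⟨n, e⟩ hz
    simp only [Finset.mem_sigma, Finset.mem_Icc, Finset.mem_filter, Nat.mem_divisors] at hz
    obtain ⟨hn, ⟨hd, _⟩, hs⟩ := hz
    have he0 : 0 < e := Nat.pos_of_dvd_of_pos hd (by omega)
    have hen : e ≤ n := Nat.le_of_dvd (by omega) hd
    simp only [Finset.mem_product, Finset.mem_filter, Finset.mem_Icc]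
    exact ⟨⟨⟨he0, by omega⟩, hs⟩, Nat.div_pos hen he0, (Nat.div_le_self _ _).trans hn.2⟩
  · rintro ⟨n, e⟩ hz ⟨n', e'⟩ hz' h
    simp only [Finset.mem_sigma, Finset.mem_Icc, Finset.mem_filter, Nat.mem_divisors] at hz hz'
    simp only [Prod.mk.injEq] at h
    obtain ⟨rfl, h2⟩ := h
    have : n = n' := by
      rw [← Nat.mul_div_cancel' hz.2.1.1, h2, Nat.mul_div_cancel' hz'.2.1.1]
    rw [this]
  · rintro ⟨n, e⟩ hz
    simp only [Finset.mem_sigma, Finset.mem_Icc, Finset.mem_filter, Nat.mem_divisors] at hz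
    simp only
    conv_lhs => rw [← Nat.mul_div_cancel' hz.2.1.1]
    push_cast
    apply le_of_eq
    rw [div_mul_div_comm, mul_one]
  · intro b _
    have := cc_nonneg K b.1
    positivity

lemma exists_root (p a : ℕ) (hp : p.Prime) (ha : ¬ p ∣ a) :
    ∃ r < p, ∀ n < p, (p ∣ a * n + 1 ↔ n = r) := by
  have : Fact p.Prime := ⟨hp⟩
  have ha' : (a : ZMod p) ≠ 0 := by
    rwa [Ne, ZMod.natCast_eq_zero_iff]
  refine ⟨(-(a : ZMod p)⁻¹).val, ZMod.val_lt _, ?_⟩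
  intro n hn
  rw [← ZMod.natCast_eq_zero_iff]
  push_cast
  constructor
  · intro h
    have : (n : ZMod p) = -(a : ZMod p)⁻¹ := by
      have h2 : (a : ZMod p) * n = -1 := eq_neg_of_add_eq_zero_left h
      field_simp
      rw [mul_comm]; exact h2
    rw [← this, ZMod.val_natCast_of_lt hn]
  · intro h
    rw [h, ZMod.natCast_zmod_val]
    field_simp
    ring

lemma root_card_one (p a : ℕ) (hp : p.Prime) (ha : ¬ p ∣ a) :
    ((Finset.range p).filter (fun n => p ∣ a * n + 1)).card = 1 := by
  obtain ⟨r, hr, h⟩ := exists_root p a hp ha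
  rw [Finset.card_eq_one]
  refine ⟨r, ?_⟩
  ext n
  simp only [Finset.mem_filter, Finset.mem_range, Finset.mem_singleton]
  constructor
  · rintro ⟨h1, h2⟩; exact (h n h1).1 h2
  · rintro rfl; exact ⟨hr, (h n hr).2 rfl⟩

lemma root_card_two (p a b : ℕ) (hp : p.Prime) (ha : ¬ p ∣ a) (hb : ¬ p ∣ b) (hab : a < b)
    (hba : ¬ p ∣ b - a) :
    ((Finset.range p).filter (fun n => p ∣ (a * n + 1) * (b * n + 1))).card = 2 := by
  obtain ⟨r, hr, h⟩ := exists_root p a hp ha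
  obtain ⟨s, hs, h'⟩ := exists_root p b hp hb
  rw [Finset.card_eq_two]
  refine ⟨r, s, ?_, ?_⟩
  · rintro rfl
    have h1 := (h r hr).2 rfl
    have h2 := (h' r hr).2 rfl
    have h3 : p ∣ (b - a) * r := by
      have := Nat.dvd_sub h2 h1
      have e : b * r + 1 - (a * r + 1) = (b - a) * r := by
        rw [Nat.sub_mul]; omega
      rwa [e] at this
    rcases hp.dvd_mul.1 h3 with h4 | h4
    · exact hba h4
    · have h5 : p ∣ 1 := (Nat.dvd_add_right (h4.mul_left a)).1 h1
      exact hp.one_lt.ne' (Nat.dvd_one.1 h5)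
  · ext n
    simp only [Finset.mem_filter, Finset.mem_range, Finset.mem_insert, Finset.mem_singleton,
      hp.dvd_mul]
    constructor
    · rintro ⟨h1, h2 | h2⟩
      · exact Or.inl ((h n h1).1 h2)
      · exact Or.inr ((h' n h1).1 h2)
    · rintro (rfl | rfl)
      · exact ⟨hr, Or.inl ((h n hr).2 rfl)⟩
      · exact ⟨hs, Or.inr ((h' n hs).2 rfl)⟩

lemma lin_mod (p a n : ℕ) : p ∣ a * (n % p) + 1 ↔ p ∣ a * n + 1 := by
  have : a * (n % p) + 1 ≡ a * n + 1 [MOD p] :=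
    Nat.ModEq.add_right _ (Nat.ModEq.mul_left _ (Nat.mod_modEq n p))
  exact this.dvd_iff dvd_rfl

lemma lin_mod_two (p a b n : ℕ) : p ∣ (a * (n % p) + 1) * (b * (n % p) + 1) ↔
    p ∣ (a * n + 1) * (b * n + 1) := by
  have h1 : a * (n % p) + 1 ≡ a * n + 1 [MOD p] :=
    Nat.ModEq.add_right _ (Nat.ModEq.mul_left _ (Nat.mod_modEq n p))
  have h2 : b * (n % p) + 1 ≡ b * n + 1 [MOD p] :=
    Nat.ModEq.add_right _ (Nat.ModEq.mul_left _ (Nat.mod_modEq n p))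
  exact (h1.mul h2).dvd_iff dvd_rfl

lemma log_pow_le_L (k : ℕ) (hk : 1 ≤ k) (hk2 : k ≤ 2) (E Q : ℕ) (hE : E ≠ 0) (hQ : 1 ≤ Q) :
    Real.log (Q + 1) ^ k ≤ 8 * (GG k E * ∑ q ∈ (Finset.Icc 1 (Q ^ 2)).filter
      (fun q => Squarefree q ∧ Nat.Coprime q E), cc k q) := by
  have hM := M_le k (Q ^ 2) E hE
  have hl : 0 ≤ Real.log (Q + 1) := Real.log_nonneg (by
    have : (0 : ℝ) ≤ Q := by positivity
    linarith)
  have h1 := log_le_M1 Q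
  obtain rfl | rfl : k = 1 ∨ k = 2 := by omega
  · have h2 : ∑ q ∈ (Finset.Icc 1 Q).filter Squarefree, cc 1 q ≤
        ∑ q ∈ (Finset.Icc 1 (Q ^ 2)).filter Squarefree, cc 1 q := by
      apply Finset.sum_le_sum_of_subset_of_nonneg
      · apply Finset.filter_subset_filter
        apply Finset.Icc_subset_Icc_right
        nlinarith
      · intros; exact cc_nonneg _ _
    have h3 : 0 ≤ ∑ q ∈ (Finset.Icc 1 Q).filter Squarefree, cc 1 q :=
      Finset.sum_nonneg fun _ _ => cc_nonneg _ _
    rw [pow_one]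
    linarith
  · have h2 := M1_sq_le Q
    have h3 : Real.log (Q + 1) ^ 2 ≤
        (2 * ∑ q ∈ (Finset.Icc 1 Q).filter Squarefree, cc 1 q) ^ 2 :=
      pow_le_pow_left₀ hl h1 2
    rw [mul_pow] at h3
    linarith

lemma sieve_app (k : ℕ) (hk : 1 ≤ k) (hk2 : k ≤ 2) (F : ℕ → ℕ) (E : ℕ) (hE : E ≠ 0)
    (hF : ∀ p, p.Prime → ¬ p ∣ E → k < p ∧ (∀ n, p ∣ F (n % p) ↔ p ∣ F n) ∧
      ((Finset.range p).filter (fun n => p ∣ F n)).card = k)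
    (N : ℕ) (hN : 1 ≤ N) (A : Finset ℕ)
    (hA : ∀ n ∈ A, n ≤ N ∧ ∀ p, p.Prime → p ∣ F n → n < p) :
    (A.card : ℝ) * Real.log (N + 1) ^ k ≤ 3600 * GG k E * N := by
  classical
  obtain ⟨Q, hQ1, hQ2⟩ : ∃ Q : ℕ, Q ^ 12 ≤ N ∧ N < (Q + 1) ^ 12 := by
    have hex : ∃ m : ℕ, N < (m + 1) ^ 12 := ⟨N, by
      calc N < N + 1 := by omega
        _ ≤ (N + 1) ^ 12 := Nat.le_self_pow (by norm_num) _⟩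
    refine ⟨Nat.find hex, ?_, Nat.find_spec hex⟩
    rcases h : Nat.find hex with _ | m
    · simp
    · have := Nat.find_min hex (m := m) (by omega)
      omega
  have hQ : 1 ≤ Q := by
    rcases Nat.eq_zero_or_pos Q with h | h
    · rw [h] at hQ2; simp at hQ2; omega
    · exact h
  set D := (Finset.Icc 1 (Q ^ 2)).filter (fun q => Squarefree q ∧ Nat.Coprime q E) with hD
  have hDp : ∀ q ∈ D, ∀ p ∈ q.primeFactors, p.Prime ∧ p ≤ Q ^ 2 ∧ ¬ p ∣ E := by
    intro q hq p hp
    simp only [hD, Finset.mem_filter, Finset.mem_Icc] at hq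
    have hpp := Nat.prime_of_mem_primeFactors hp
    have hpd := Nat.dvd_of_mem_primeFactors hp
    refine ⟨hpp, (Nat.le_of_dvd (by omega) hpd).trans hq.1.2, fun h => ?_⟩
    exact hpp.one_lt.ne' (Nat.eq_one_of_dvd_coprimes hq.2.2 hpd h)
  set S := A.filter (fun n => Q ^ 2 ≤ n) with hS
  have hmain := sieve_main k hk hk2 F D (Q ^ 2) (N + 1)
    (by
      intro q hq
      have hq' := hq
      simp only [hD, Finset.mem_filter, Finset.mem_Icc] at hq'
      refine ⟨hq'.2.1, hq'.1.2, fun p hp => ?_⟩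
      have := hDp q hq p hp
      exact hF p this.1 this.2.2)
    (by
      simp only [hD, Finset.mem_filter, Finset.mem_Icc]
      refine ⟨⟨le_rfl, Nat.one_le_pow _ _ hQ⟩, squarefree_one, Nat.coprime_one_left _⟩)
    S
    (by
      intro n hn
      rw [hS, Finset.mem_filter] at hn
      have h1 := hA n hn.1
      refine ⟨by omega, fun q hq p hp hdvd => ?_⟩
      have h2 := hDp q hq p hp
      have := h1.2 p h2.1 hdvd
      omega)
  have hLL : ∑ q ∈ D, cc k q ≤ ∑ q ∈ D, ∏ p ∈ q.primeFactors, ((k : ℝ) / (p - k)) := by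
    apply Finset.sum_le_sum
    intro q hq
    apply Finset.prod_le_prod (fun _ _ => by positivity)
    intro p hp
    have h2 := hDp q hq p hp
    have h3 : (k : ℝ) < p := by exact_mod_cast (hF p h2.1 h2.2.2).1
    apply div_le_div_of_nonneg_left (Nat.cast_nonneg _) (by linarith)
    have : (0 : ℝ) ≤ k := Nat.cast_nonneg _
    linarith
  have hlog := log_pow_le_L k hk hk2 E Q hE hQ
  rw [← hD] at hlog
  have hG := GG_one_le k E
  have hNr : (1 : ℝ) ≤ N := by exact_mod_cast hN
  have hQN : (Q : ℝ) ^ 12 ≤ N := by exact_mod_cast hQ1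
  have hQr : (1 : ℝ) ≤ Q := by exact_mod_cast hQ
  have hl0 : 0 ≤ Real.log (Q + 1) := Real.log_nonneg (by linarith)
  have hSb : (S.card : ℝ) * Real.log (Q + 1) ^ k ≤ 24 * GG k E * N := by
    have h1 : (S.card : ℝ) * ∑ q ∈ D, cc k q ≤ 3 * N := by
      calc _ ≤ _ := mul_le_mul_of_nonneg_left hLL (Nat.cast_nonneg _)
        _ ≤ _ := hmain
        _ ≤ 3 * N := by push_cast; ring_nf; linarith
    calc _ ≤ (S.card : ℝ) * (8 * (GG k E * ∑ q ∈ D, cc k q)) :=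
          mul_le_mul_of_nonneg_left hlog (Nat.cast_nonneg _)
      _ = 8 * GG k E * ((S.card : ℝ) * ∑ q ∈ D, cc k q) := by ring
      _ ≤ 8 * GG k E * (3 * N) := mul_le_mul_of_nonneg_left h1 (by positivity)
      _ = _ := by ring
  have hRb : ((A.filter (fun n => ¬ Q ^ 2 ≤ n)).card : ℝ) * Real.log (Q + 1) ^ k
      ≤ GG k E * N := by
    have h1 : (A.filter (fun n => ¬ Q ^ 2 ≤ n)).card ≤ Q ^ 2 := by
      calc _ ≤ (Finset.range (Q ^ 2)).card := by
            apply Finset.card_le_card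
            intro n hn
            rw [Finset.mem_filter] at hn
            rw [Finset.mem_range]; omega
        _ = _ := Finset.card_range _
    have h1' : ((A.filter (fun n => ¬ Q ^ 2 ≤ n)).card : ℝ) ≤ (Q : ℝ) ^ 2 := by exact_mod_cast h1
    have h2 : Real.log (Q + 1) ≤ Q := by
      have := Real.log_le_sub_one_of_pos (x := (Q : ℝ) + 1) (by linarith)
      linarith
    have h3 : Real.log (Q + 1) ^ k ≤ (Q : ℝ) ^ 2 := by
      calc _ ≤ (Q : ℝ) ^ k := pow_le_pow_left₀ hl0 h2 k
        _ ≤ _ := pow_le_pow_right₀ hQr hk2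
    calc _ ≤ (Q : ℝ) ^ 2 * (Q : ℝ) ^ 2 := mul_le_mul h1' h3 (by positivity) (by positivity)
      _ = (Q : ℝ) ^ 4 := by ring
      _ ≤ (Q : ℝ) ^ 12 := pow_le_pow_right₀ hQr (by norm_num)
      _ ≤ N := hQN
      _ ≤ GG k E * N := le_mul_of_one_le_left (by linarith) hG
  have hcard : (A.card : ℝ) = S.card + (A.filter (fun n => ¬ Q ^ 2 ≤ n)).card := by
    exact_mod_cast (Finset.card_filter_add_card_filter_not (s := A) (fun n => Q ^ 2 ≤ n)).symm
  have hlogN : Real.log (N + 1) ^ k ≤ 144 * Real.log (Q + 1) ^ k := by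
    have h1 : Real.log (N + 1) ≤ 12 * Real.log (Q + 1) := by
      have : (N : ℝ) + 1 ≤ ((Q : ℝ) + 1) ^ 12 := by exact_mod_cast hQ2
      have h2 := Real.log_le_log (by linarith) this
      rw [Real.log_pow] at h2
      exact_mod_cast h2
    have h0 : 0 ≤ Real.log (N + 1) := Real.log_nonneg (by linarith)
    calc _ ≤ (12 * Real.log (Q + 1)) ^ k := pow_le_pow_left₀ h0 h1 k
      _ = (12 : ℝ) ^ k * Real.log (Q + 1) ^ k := by rw [mul_pow]
      _ ≤ (12 : ℝ) ^ 2 * Real.log (Q + 1) ^ k := by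
          apply mul_le_mul_of_nonneg_right _ (by positivity)
          exact pow_le_pow_right₀ (by norm_num) hk2
      _ = _ := by norm_num
  calc _ ≤ (A.card : ℝ) * (144 * Real.log (Q + 1) ^ k) :=
        mul_le_mul_of_nonneg_left hlogN (Nat.cast_nonneg _)
    _ = 144 * (S.card * Real.log (Q + 1) ^ k +
        (A.filter (fun n => ¬ Q ^ 2 ≤ n)).card * Real.log (Q + 1) ^ k) := by rw [hcard]; ring
    _ ≤ 144 * (24 * GG k E * N + GG k E * N) := by linarith
    _ = _ := by ring

theorem sieve_one (a N : ℕ) (ha : 1 ≤ a) (hN : 1 ≤ N) :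
    (((Finset.Icc 1 N).filter (fun n => (a * n + 1).Prime)).card : ℝ) * Real.log (N + 1)
      ≤ 3600 * GG 1 a * N := by
  have := sieve_app 1 le_rfl (by norm_num) (fun n => a * n + 1) a (by omega)
    (fun p hp hpa => ⟨hp.one_lt, fun n => lin_mod p a n, root_card_one p a hp hpa⟩) N hN
    ((Finset.Icc 1 N).filter (fun n => (a * n + 1).Prime)) (by
      intro n hn
      simp only [Finset.mem_filter, Finset.mem_Icc] at hn
      refine ⟨hn.1.2, fun p hp hd => ?_⟩
      have := (Nat.prime_dvd_prime_iff_eq hp hn.2).1 hd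
      nlinarith)
  rwa [pow_one] at this

theorem sieve_two (a b N : ℕ) (ha : 1 ≤ a) (hab : a < b) (hN : 1 ≤ N) :
    (((Finset.Icc 1 N).filter (fun n => (a * n + 1).Prime ∧ (b * n + 1).Prime)).card : ℝ)
      * Real.log (N + 1) ^ 2 ≤ 3600 * (GG 2 a * GG 2 b * GG 2 (b - a)) * N := by
  have hE : a * b * (b - a) ≠ 0 := by
    have : b - a ≠ 0 := by omega
    have : b ≠ 0 := by omega
    positivity
  have := sieve_app 2 (by norm_num) le_rfl (fun n => (a * n + 1) * (b * n + 1))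
    (a * b * (b - a)) hE
    (by
      intro p hp hpE
      have h1 : ¬ p ∣ a := fun h => hpE ((h.mul_right b).mul_right _)
      have h2 : ¬ p ∣ b := fun h => hpE ((h.mul_left a).mul_right _)
      have h3 : ¬ p ∣ b - a := fun h => hpE (h.mul_left _)
      refine ⟨?_, fun n => lin_mod_two p a b n, root_card_two p a b hp h1 h2 hab h3⟩
      rcases hp.two_le.lt_or_eq with h | h
      · exact h
      · subst h; omega) N hN
    ((Finset.Icc 1 N).filter (fun n => (a * n + 1).Prime ∧ (b * n + 1).Prime)) (by
      intro n hn
      simp only [Finset.mem_filter, Finset.mem_Icc] at hn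
      refine ⟨hn.1.2, fun p hp hd => ?_⟩
      rcases hp.dvd_mul.1 hd with hd | hd
      · have := (Nat.prime_dvd_prime_iff_eq hp hn.2.1).1 hd
        nlinarith
      · have := (Nat.prime_dvd_prime_iff_eq hp hn.2.2).1 hd
        nlinarith)
  refine this.trans ?_
  apply mul_le_mul_of_nonneg_right _ (Nat.cast_nonneg _)
  apply mul_le_mul_of_nonneg_left _ (by norm_num)
  refine (GG_mul_le 2 (a * b) (b - a) ?_ (by omega)).trans ?_
  · have : b ≠ 0 := by omega
    positivity
  · exact mul_le_mul_of_nonneg_right (GG_mul_le 2 a b (by omega) (by omega)) (GG_nonneg _ _)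

lemma half_le_log_two : (1 : ℝ) / 2 ≤ Real.log 2 := by
  have := Real.log_two_gt_d9
  linarith

lemma sum_prime_inv (u e X : ℕ) (hu : 1 ≤ u) (he : 1 ≤ e) :
    ∑ a ∈ (Finset.Icc e X).filter (fun a => (u * a + 1).Prime), (1 : ℝ) / a ≤
      ∑ j ∈ Finset.Icc (Nat.log 2 e) (Nat.log 2 X), 14400 * GG 1 u / ((j : ℝ) + 1) := by
  classical
  rw [← Finset.sum_fiberwise_of_maps_to (g := fun a => Nat.log 2 a)
    (t := Finset.Icc (Nat.log 2 e) (Nat.log 2 X))]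
  · apply Finset.sum_le_sum
    intro j _
    set B := ((Finset.Icc e X).filter (fun a => (u * a + 1).Prime)).filter
      (fun a => Nat.log 2 a = j) with hB
    have hmem : ∀ a ∈ B, 2 ^ j ≤ a ∧ a < 2 ^ (j + 1) ∧ (u * a + 1).Prime := by
      intro a ha
      simp only [hB, Finset.mem_filter, Finset.mem_Icc] at ha
      obtain ⟨⟨⟨h1, h2⟩, h3⟩, h4⟩ := ha
      refine ⟨?_, ?_, h3⟩
      · rw [← h4]; exact Nat.pow_log_le_self 2 (by omega)
      · rw [← h4]; exact Nat.lt_pow_succ_log_self (by norm_num) a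
    have h1 : ∑ a ∈ B, (1 : ℝ) / a ≤ B.card * (1 / (2 : ℝ) ^ j) := by
      rw [← nsmul_eq_mul]
      apply Finset.sum_le_card_nsmul
      intro a ha
      apply one_div_le_one_div_of_le (by positivity)
      exact_mod_cast (hmem a ha).1
    have h2 : B.card ≤ ((Finset.Icc 1 (2 ^ (j + 1))).filter
        (fun n => (u * n + 1).Prime)).card := by
      apply Finset.card_le_card
      intro a ha
      have := hmem a ha
      have h0 : 0 < 2 ^ j := by positivity
      simp only [Finset.mem_filter, Finset.mem_Icc]
      exact ⟨⟨by omega, by omega⟩, this.2.2⟩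
    have h3 := sieve_one u (2 ^ (j + 1)) hu Nat.one_le_two_pow
    have h4 : ((j : ℝ) + 1) / 2 ≤ Real.log (((2 ^ (j + 1) : ℕ) : ℝ) + 1) := by
      have h5 : Real.log ((2 : ℝ) ^ (j + 1)) ≤ Real.log (((2 ^ (j + 1) : ℕ) : ℝ) + 1) := by
        apply Real.log_le_log (by positivity)
        push_cast; linarith
      rw [Real.log_pow] at h5
      push_cast at h5
      have := mul_le_mul_of_nonneg_left half_le_log_two (by positivity : (0 : ℝ) ≤ (j : ℝ) + 1)
      push_cast
      linarith
    have h6 : (B.card : ℝ) * (((j : ℝ) + 1) / 2) ≤ 3600 * GG 1 u * (2 * 2 ^ j) := by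
      calc _ ≤ _ := mul_le_mul (Nat.cast_le.2 h2) h4 (by positivity) (by positivity)
        _ ≤ _ := h3
        _ = _ := by push_cast; ring
    refine h1.trans ?_
    rw [le_div_iff₀ (by positivity), mul_one_div, div_mul_eq_mul_div, div_le_iff₀ (by positivity)]
    linarith
  · intro a ha
    simp only [Finset.mem_filter, Finset.mem_Icc] at ha
    rw [Finset.mem_Icc]
    exact ⟨Nat.log_mono_right ha.1.1, Nat.log_mono_right ha.1.2⟩

lemma sum_log_swap (X : ℕ) :
    ∑ e ∈ Finset.Icc 1 X, GG 1 e / e * ∑ j ∈ Finset.Icc (Nat.log 2 e) (Nat.log 2 X),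
      (1 : ℝ) / ((j : ℝ) + 1) ≤ 2 * Real.exp 2 * ((Nat.log 2 X : ℝ) + 1) := by
  simp only [Finset.mul_sum]
  have hsw : ∑ e ∈ Finset.Icc 1 X, ∑ j ∈ Finset.Icc (Nat.log 2 e) (Nat.log 2 X),
      GG 1 e / e * ((1 : ℝ) / ((j : ℝ) + 1)) =
      ∑ j ∈ Finset.range (Nat.log 2 X + 1), ∑ e ∈ (Finset.Icc 1 X).filter
        (fun e => Nat.log 2 e ≤ j), GG 1 e / e * ((1 : ℝ) / ((j : ℝ) + 1)) := by
    apply Finset.sum_comm'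
    intro e j
    simp only [Finset.mem_Icc, Finset.mem_range, Finset.mem_filter]
    constructor
    · rintro ⟨h1, h2, h3⟩; exact ⟨⟨h1, h2⟩, by omega⟩
    · rintro ⟨⟨h1, h2⟩, h3⟩; exact ⟨h1, h2, by omega⟩
  rw [hsw]
  calc _ ≤ ∑ j ∈ Finset.range (Nat.log 2 X + 1), 2 * Real.exp 2 := by
        apply Finset.sum_le_sum
        intro j _
        rw [← Finset.sum_mul, mul_one_div, div_le_iff₀ (by positivity)]
        calc _ ≤ ∑ e ∈ Finset.Icc 1 (2 ^ (j + 1)), GG 1 e / e := by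
              apply Finset.sum_le_sum_of_subset_of_nonneg
              · intro e he
                simp only [Finset.mem_filter, Finset.mem_Icc] at he ⊢
                refine ⟨he.1.1, ?_⟩
                calc e ≤ 2 ^ (Nat.log 2 e + 1) := (Nat.lt_pow_succ_log_self (by norm_num) e).le
                  _ ≤ _ := Nat.pow_le_pow_right (by norm_num) (by omega)
              · intro e _ _
                exact div_nonneg (GG_nonneg _ _) (Nat.cast_nonneg _)
          _ ≤ _ := sum_GG_div 1 _
          _ ≤ Real.exp 2 * (2 * (j + 1)) := by
              push_cast
              rw [mul_one]
              apply mul_le_mul_of_nonneg_left _ (Real.exp_pos _).le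
              rw [Real.log_pow]
              have h1 : Real.log 2 ≤ 1 := by
                have := Real.log_two_lt_d9
                linarith
              have h2 : (0 : ℝ) ≤ j := Nat.cast_nonneg _
              push_cast
              nlinarith
          _ = _ := by ring
    _ = _ := by simp; ring

lemma sum_inner_prime (k X : ℕ) (hk : 1 ≤ k) :
    ∑ z ∈ (Finset.Icc 1 X ×ˢ Finset.Icc 1 X).filter (fun z => (k * z.1 * z.2 + 1).Prime),
      (1 : ℝ) / (z.1 * z.2) ≤ 57600 * Real.exp 2 * GG 1 k * ((Nat.log 2 X : ℝ) + 1) := by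
  classical
  set H := ∑ e ∈ Finset.Icc 1 X, ∑ a ∈ (Finset.Icc e X).filter (fun a => (k * e * a + 1).Prime),
    (1 : ℝ) / (e * a) with hH
  have hHb : H ≤ 28800 * Real.exp 2 * GG 1 k * ((Nat.log 2 X : ℝ) + 1) := by
    have h1 : H ≤ 14400 * GG 1 k * ∑ e ∈ Finset.Icc 1 X, GG 1 e / e *
        ∑ j ∈ Finset.Icc (Nat.log 2 e) (Nat.log 2 X), (1 : ℝ) / ((j : ℝ) + 1) := by
      rw [hH, Finset.mul_sum]
      apply Finset.sum_le_sum
      intro e he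
      rw [Finset.mem_Icc] at he
      have h2 := sum_prime_inv (k * e) e X (Nat.mul_pos hk he.1) he.1
      have h3 : ∑ a ∈ (Finset.Icc e X).filter (fun a => (k * e * a + 1).Prime),
          (1 : ℝ) / (e * a) = (1 / e) * ∑ a ∈ (Finset.Icc e X).filter
            (fun a => (k * e * a + 1).Prime), (1 : ℝ) / a := by
        rw [Finset.mul_sum]
        apply Finset.sum_congr rfl
        intro a _
        rw [div_mul_div_comm, one_mul]
      have h4 : ∑ j ∈ Finset.Icc (Nat.log 2 e) (Nat.log 2 X),
          14400 * GG 1 (k * e) / ((j : ℝ) + 1) = 14400 * GG 1 (k * e) *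
          ∑ j ∈ Finset.Icc (Nat.log 2 e) (Nat.log 2 X), (1 : ℝ) / ((j : ℝ) + 1) := by
        rw [Finset.mul_sum]
        apply Finset.sum_congr rfl
        intro j _
        rw [mul_one_div]
      rw [h4] at h2
      rw [h3]
      have hs0 : 0 ≤ ∑ j ∈ Finset.Icc (Nat.log 2 e) (Nat.log 2 X), (1 : ℝ) / ((j : ℝ) + 1) :=
        Finset.sum_nonneg fun _ _ => by positivity
      generalize ∑ j ∈ Finset.Icc (Nat.log 2 e) (Nat.log 2 X), (1 : ℝ) / ((j : ℝ) + 1) = s at *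
      calc _ ≤ (1 / (e : ℝ)) * (14400 * GG 1 (k * e) * s) :=
            mul_le_mul_of_nonneg_left h2 (by positivity)
        _ ≤ (1 / (e : ℝ)) * (14400 * (GG 1 k * GG 1 e) * s) := by
            have := GG_mul_le 1 k e (by omega) (by omega)
            gcongr
        _ = _ := by ring
    have h2 := mul_le_mul_of_nonneg_left (sum_log_swap X)
      (by have := GG_nonneg 1 k; positivity : 0 ≤ 14400 * GG 1 k)
    refine h1.trans (h2.trans (le_of_eq ?_))
    ring
  have hHs : H = ∑ z ∈ (Finset.Icc 1 X).sigma (fun e => (Finset.Icc e X).filter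
      (fun a => (k * e * a + 1).Prime)), (1 : ℝ) / (z.1 * z.2) := by
    rw [Finset.sum_sigma]
  rw [← Finset.sum_filter_add_sum_filter_not _ (fun z : ℕ × ℕ => z.1 ≤ z.2)]
  have hA : ∑ z ∈ ((Finset.Icc 1 X ×ˢ Finset.Icc 1 X).filter
      (fun z => (k * z.1 * z.2 + 1).Prime)).filter (fun z : ℕ × ℕ => z.1 ≤ z.2),
      (1 : ℝ) / (z.1 * z.2) ≤ H := by
    rw [hHs]
    apply sum_le_of_inj _ _ (fun z => (⟨z.1, z.2⟩ : (_ : ℕ) × ℕ))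
    · rintro ⟨e, a⟩ hz
      simp only [Finset.mem_filter, Finset.mem_product, Finset.mem_Icc, Finset.mem_sigma] at hz ⊢
      exact ⟨hz.1.1.1, ⟨hz.2, hz.1.1.2.2⟩, hz.1.2⟩
    · rintro ⟨e, a⟩ _ ⟨e', a'⟩ _ h
      simp only [Sigma.mk.injEq, heq_eq_eq] at h
      rw [h.1, h.2]
    · intro z _; exact le_rfl
    · intro z _; positivity
  have hB : ∑ z ∈ ((Finset.Icc 1 X ×ˢ Finset.Icc 1 X).filter
      (fun z => (k * z.1 * z.2 + 1).Prime)).filter (fun z : ℕ × ℕ => ¬ z.1 ≤ z.2),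
      (1 : ℝ) / (z.1 * z.2) ≤ H := by
    rw [hHs]
    apply sum_le_of_inj _ _ (fun z => (⟨z.2, z.1⟩ : (_ : ℕ) × ℕ))
    · rintro ⟨e, a⟩ hz
      simp only [Finset.mem_filter, Finset.mem_product, Finset.mem_Icc, Finset.mem_sigma] at hz ⊢
      refine ⟨hz.1.1.2, ⟨by omega, hz.1.1.1.2⟩, ?_⟩
      rw [mul_right_comm]; exact hz.1.2
    · rintro ⟨e, a⟩ _ ⟨e', a'⟩ _ h
      simp only [Sigma.mk.injEq, heq_eq_eq] at h
      rw [h.1, h.2]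
    · intro z _
      simp only
      rw [mul_comm]
    · intro z _; positivity
  linarith

lemma cc_GG_le (k : ℕ) : cc 1 k * GG 1 k ≤ cc 2 k := by
  unfold cc GG
  rw [← Finset.prod_mul_distrib]
  apply Finset.prod_le_prod (fun _ _ => by positivity)
  intro p hp
  have hp1 : (1 : ℝ) ≤ p := by exact_mod_cast (Nat.prime_of_mem_primeFactors hp).one_le
  have h0 : 0 ≤ 1 / (p : ℝ) := by positivity
  have h1 : 1 / (p : ℝ) ≤ 1 := by rw [div_le_one (by linarith)]; exact hp1
  push_cast
  rw [div_eq_mul_one_div (2 : ℝ)]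
  nlinarith

lemma sum_W (X : ℕ) :
    ∑ z ∈ (Finset.Icc 1 X ×ˢ Finset.Icc 1 X).filter (fun z => (z.1 * z.2 + 1).Prime),
      GG 1 z.1 / (z.1 * z.2) ≤ 57600 * Real.exp 2 * Real.exp 4 * ((Nat.log 2 X : ℝ) + 1) := by
  classical
  have h1 : ∑ z ∈ (Finset.Icc 1 X ×ˢ Finset.Icc 1 X).filter (fun z => (z.1 * z.2 + 1).Prime),
      GG 1 z.1 / (z.1 * z.2) = ∑ w ∈ ((Finset.Icc 1 X ×ˢ Finset.Icc 1 X).filter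
        (fun z => (z.1 * z.2 + 1).Prime)).sigma (fun z => z.1.divisors.filter Squarefree),
        cc 1 w.2 / (w.1.1 * w.1.2) := by
    rw [Finset.sum_sigma]
    apply Finset.sum_congr rfl
    intro z hz
    simp only [Finset.mem_filter, Finset.mem_product, Finset.mem_Icc] at hz
    rw [GG_eq 1 z.1 (by omega), Finset.sum_div]
  have h2 : ∑ w ∈ ((Finset.Icc 1 X ×ˢ Finset.Icc 1 X).filter
        (fun z => (z.1 * z.2 + 1).Prime)).sigma (fun z => z.1.divisors.filter Squarefree),
        cc 1 w.2 / (w.1.1 * w.1.2) ≤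
      ∑ w ∈ ((Finset.Icc 1 X).filter Squarefree).sigma (fun k =>
        (Finset.Icc 1 X ×ˢ Finset.Icc 1 X).filter (fun z => (k * z.1 * z.2 + 1).Prime)),
        cc 1 w.1 / w.1 * (1 / (w.2.1 * w.2.2)) := by
    apply sum_le_of_inj _ _ (fun w : (_ : ℕ × ℕ) × ℕ =>
      (⟨w.2, (w.1.1 / w.2, w.1.2)⟩ : (_ : ℕ) × (ℕ × ℕ)))
    · rintro ⟨⟨d, a⟩, k⟩ hz
      simp only [Finset.mem_filter, Finset.mem_product, Finset.mem_Icc, Finset.mem_sigma,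
        Nat.mem_divisors] at hz ⊢
      obtain ⟨⟨⟨hd, ha⟩, hp⟩, ⟨hkd, _⟩, hks⟩ := hz
      have hk0 : 0 < k := Nat.pos_of_dvd_of_pos hkd (by omega)
      have hkle : k ≤ d := Nat.le_of_dvd (by omega) hkd
      refine ⟨⟨⟨hk0, by omega⟩, hks⟩, ⟨⟨Nat.div_pos hkle hk0, (Nat.div_le_self _ _).trans hd.2⟩,
        ha⟩, ?_⟩
      rwa [Nat.mul_div_cancel' hkd]
    · rintro ⟨⟨d, a⟩, k⟩ hz ⟨⟨d', a'⟩, k'⟩ hz' h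
      simp only [Finset.mem_filter, Finset.mem_product, Finset.mem_Icc, Finset.mem_sigma,
        Nat.mem_divisors] at hz hz'
      simp only [Sigma.mk.injEq, heq_eq_eq, Prod.mk.injEq] at h
      obtain ⟨rfl, h3, rfl⟩ := h
      have : d = d' := by
        rw [← Nat.mul_div_cancel' hz.2.1.1, h3, Nat.mul_div_cancel' hz'.2.1.1]
      rw [this]
    · rintro ⟨⟨d, a⟩, k⟩ hz
      simp only [Finset.mem_filter, Finset.mem_product, Finset.mem_Icc, Finset.mem_sigma,
        Nat.mem_divisors] at hz
      simp only
      conv_lhs => rw [← Nat.mul_div_cancel' hz.2.1.1]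
      push_cast
      apply le_of_eq
      rw [div_mul_div_comm, mul_one, mul_assoc]
    · intro w _
      have := cc_nonneg 1 w.1
      positivity
  rw [h1]
  refine h2.trans ?_
  rw [Finset.sum_sigma]
  calc _ ≤ ∑ k ∈ (Finset.Icc 1 X).filter Squarefree,
        (57600 * Real.exp 2 * ((Nat.log 2 X : ℝ) + 1)) * (cc 2 k / k) := by
        apply Finset.sum_le_sum
        intro k hk
        simp only [Finset.mem_filter, Finset.mem_Icc] at hk
        simp only
        rw [← Finset.mul_sum]
        have h3 := sum_inner_prime k X hk.1.1
        have h4 := cc_nonneg 1 k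
        calc _ ≤ cc 1 k / k * _ := mul_le_mul_of_nonneg_left h3 (by positivity)
          _ = (57600 * Real.exp 2 * ((Nat.log 2 X : ℝ) + 1)) * ((cc 1 k * GG 1 k) / k) := by ring
          _ ≤ _ := by
            have := cc_GG_le k
            gcongr
    _ ≤ (57600 * Real.exp 2 * ((Nat.log 2 X : ℝ) + 1)) * Real.exp 4 := by
        rw [← Finset.mul_sum]
        apply mul_le_mul_of_nonneg_left _ (by positivity)
        have := sum_cc_div 2 X
        have e : (2 : ℝ) * ((2 : ℕ) : ℝ) = 4 := by norm_num
        rwa [e] at this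
    _ = _ := by ring

/-- triples with `b` largest -/
noncomputable def Btwo (X : ℕ) : Finset ((_ : ℕ × ℕ) × ℕ) :=
  ((Finset.Icc 1 X ×ˢ Finset.Icc 1 X).filter (fun z => (z.1 * z.2 + 1).Prime)).sigma
    (fun z => (Finset.Icc 1 X).filter (fun b => z.1 * z.2 * b ≤ X ∧ (z.1 * b + 1).Prime ∧
      z.1 ≤ b ∧ z.2 ≤ b))

/-- triples with `d` largest -/
noncomputable def Bone (X : ℕ) : Finset ((_ : ℕ × ℕ) × ℕ) :=
  ((Finset.Icc 1 X ×ˢ Finset.Icc 1 X).filter (fun z => z.1 < z.2)).sigma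
    (fun z => (Finset.Icc 1 X).filter (fun d => z.1 * z.2 * d ≤ X ∧
      ((z.1 * d + 1).Prime ∧ (z.2 * d + 1).Prime) ∧ z.1 ≤ d ∧ z.2 ≤ d))

lemma log_le_three (X u v b N : ℕ) (hX : 1 ≤ X) (hu : 1 ≤ u) (hv : 1 ≤ v) (hub : u ≤ b)
    (hvb : v ≤ b) (h : u * v * b ≤ X) (hN : N = X / (u * v)) :
    1 ≤ N ∧ b ≤ N ∧ Real.log X ≤ 3 * Real.log (N + 1) := by
  have huv : 0 < u * v := Nat.mul_pos hu hv
  have hbN : b ≤ N := by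
    rw [hN, Nat.le_div_iff_mul_le huv, mul_comm]; exact h
  refine ⟨by omega, hbN, ?_⟩
  have h1 : X < u * v * (N + 1) := by
    rw [hN]; exact Nat.lt_mul_div_succ X huv
  have h2 : u * v * (N + 1) ≤ (N + 1) ^ 3 := by
    calc u * v * (N + 1) ≤ (N + 1) * (N + 1) * (N + 1) := by
          gcongr <;> omega
      _ = _ := by ring
  have h3 : (X : ℝ) ≤ ((N : ℝ) + 1) ^ 3 := by exact_mod_cast (h1.le.trans h2)
  have h4 := Real.log_le_log (by exact_mod_cast hX) h3
  rw [Real.log_pow] at h4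
  exact_mod_cast h4

lemma Btwo_card (X : ℕ) (hX : 2 ≤ X) :
    ((Btwo X).card : ℝ) ≤ 10800 * (57600 * Real.exp 2 * Real.exp 4) * 4 * X := by
  have hXr : (2 : ℝ) ≤ X := by exact_mod_cast hX
  have hlX : 0 < Real.log X := Real.log_pos (by linarith)
  have hlX2 : (1 : ℝ) / 2 ≤ Real.log X :=
    half_le_log_two.trans (Real.log_le_log (by norm_num) hXr)
  have hJ : (Nat.log 2 X : ℝ) + 1 ≤ 4 * Real.log X := by
    have h1 : (2 : ℝ) ^ (Nat.log 2 X) ≤ X := by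
      exact_mod_cast Nat.pow_log_le_self 2 (by omega : X ≠ 0)
    have h2 := Real.log_le_log (by positivity) h1
    rw [Real.log_pow] at h2
    have h3 : (0 : ℝ) ≤ Nat.log 2 X := Nat.cast_nonneg _
    have := mul_le_mul_of_nonneg_left half_le_log_two h3
    linarith
  have key : ((Btwo X).card : ℝ) * Real.log X ≤ ∑ z ∈ (Finset.Icc 1 X ×ˢ Finset.Icc 1 X).filter
      (fun z => (z.1 * z.2 + 1).Prime), 10800 * X * (GG 1 z.1 / (z.1 * z.2)) := by
    rw [Btwo, Finset.card_sigma, Nat.cast_sum, Finset.sum_mul]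
    apply Finset.sum_le_sum
    rintro ⟨d, a⟩ hz
    simp only [Finset.mem_filter, Finset.mem_product, Finset.mem_Icc] at hz
    simp only
    have hG := GG_nonneg 1 d
    rcases Finset.eq_empty_or_nonempty ((Finset.Icc 1 X).filter (fun b => d * a * b ≤ X ∧
      (d * b + 1).Prime ∧ d ≤ b ∧ a ≤ b)) with h | ⟨b, hb⟩
    · rw [h]; simp only [Finset.card_empty, Nat.cast_zero, zero_mul]
      positivity
    · simp only [Finset.mem_filter, Finset.mem_Icc] at hb
      obtain ⟨hN1, _, hlog⟩ := log_le_three X d a b _ (by omega) hz.1.1.1 hz.1.2.1 hb.2.2.2.1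
        hb.2.2.2.2 hb.2.1 rfl
      have hs := sieve_one d (X / (d * a)) hz.1.1.1 hN1
      have hsub : ((Finset.Icc 1 X).filter (fun b => d * a * b ≤ X ∧
          (d * b + 1).Prime ∧ d ≤ b ∧ a ≤ b)).card ≤
          ((Finset.Icc 1 (X / (d * a))).filter (fun n => (d * n + 1).Prime)).card := by
        apply Finset.card_le_card
        intro c hc
        simp only [Finset.mem_filter, Finset.mem_Icc] at hc ⊢
        obtain ⟨_, h2, _⟩ := log_le_three X d a c _ (by omega) hz.1.1.1 hz.1.2.1 hc.2.2.2.1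
          hc.2.2.2.2 hc.2.1 rfl
        exact ⟨⟨hc.1.1, h2⟩, hc.2.2.1⟩
      have hNle : ((X / (d * a) : ℕ) : ℝ) ≤ (X : ℝ) / (d * a) := by
        have := @Nat.cast_div_le ℝ _ _ _ X (d * a)
        push_cast at this
        exact this
      calc _ ≤ (((Finset.Icc 1 (X / (d * a))).filter (fun n => (d * n + 1).Prime)).card : ℝ) *
            (3 * Real.log (((X / (d * a) : ℕ) : ℝ) + 1)) :=
            mul_le_mul (Nat.cast_le.2 hsub) hlog hlX.le (Nat.cast_nonneg _)
        _ = 3 * ((((Finset.Icc 1 (X / (d * a))).filter (fun n => (d * n + 1).Prime)).card : ℝ) *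
            Real.log (((X / (d * a) : ℕ) : ℝ) + 1)) := by ring
        _ ≤ 3 * (3600 * GG 1 d * ((X / (d * a) : ℕ) : ℝ)) :=
            mul_le_mul_of_nonneg_left hs (by norm_num)
        _ ≤ 3 * (3600 * GG 1 d * ((X : ℝ) / (d * a))) := by gcongr
        _ = _ := by ring
  rw [← Finset.mul_sum] at key
  have h2 : ((Btwo X).card : ℝ) * Real.log X ≤
      (10800 * (57600 * Real.exp 2 * Real.exp 4) * 4 * X) * Real.log X := by
    calc _ ≤ _ := key
      _ ≤ 10800 * X * (57600 * Real.exp 2 * Real.exp 4 * ((Nat.log 2 X : ℝ) + 1)) :=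
          mul_le_mul_of_nonneg_left (sum_W X) (by positivity)
      _ ≤ 10800 * X * (57600 * Real.exp 2 * Real.exp 4 * (4 * Real.log X)) := by gcongr
      _ = _ := by ring
  exact le_of_mul_le_mul_right h2 hlX

lemma three_mul_le (a b c : ℝ) (ha : 0 ≤ a) (hb : 0 ≤ b) (hc : 0 ≤ c) :
    a * b * c ≤ a ^ 3 + b ^ 3 + c ^ 3 := by
  rcases le_total a b with h1 | h1 <;> rcases le_total b c with h2 | h2 <;>
    rcases le_total a c with h3 | h3
  all_goals
    first
    | (have : a * b * c ≤ c * c * c := by gcongr <;> linarith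
       nlinarith [pow_nonneg ha 3, pow_nonneg hb 3])
    | (have : a * b * c ≤ b * b * b := by gcongr <;> linarith
       nlinarith [pow_nonneg ha 3, pow_nonneg hc 3])
    | (have : a * b * c ≤ a * a * a := by gcongr <;> linarith
       nlinarith [pow_nonneg hb 3, pow_nonneg hc 3])

lemma sum_triple (X : ℕ) (hX : 1 ≤ X) :
    ∑ z ∈ (Finset.Icc 1 X ×ˢ Finset.Icc 1 X).filter (fun z => z.1 < z.2),
      GG 2 z.1 * GG 2 z.2 * GG 2 (z.2 - z.1) / (z.1 * z.2) ≤
      3 * Real.exp 52 * (1 + Real.log X) ^ 2 := by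
  have hl : 0 ≤ Real.log X := Real.log_nonneg (by exact_mod_cast hX)
  have hprod : ∑ z ∈ Finset.Icc 1 X ×ˢ Finset.Icc 1 X, (1 : ℝ) / z.1 * (GG 26 z.2 / z.2) ≤
      Real.exp 52 * (1 + Real.log X) ^ 2 := by
    rw [Finset.sum_product' (f := fun x y : ℕ => (1 : ℝ) / x * (GG 26 y / y)),
      ← Finset.sum_mul_sum]
    have h1 := sum_GG_div 26 X
    have e : (2 : ℝ) * ((26 : ℕ) : ℝ) = 52 := by norm_num
    rw [e] at h1
    calc _ ≤ (1 + Real.log X) * (Real.exp 52 * (1 + Real.log X)) := by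
          apply mul_le_mul (sum_inv_le X) h1 _ (by positivity)
          exact Finset.sum_nonneg fun _ _ => div_nonneg (GG_nonneg _ _) (Nat.cast_nonneg _)
      _ = _ := by ring
  have hnn : ∀ z : ℕ × ℕ, 0 ≤ (1 : ℝ) / z.1 * (GG 26 z.2 / z.2) := by
    intro z
    have := GG_nonneg 26 z.2
    positivity
  set P := (Finset.Icc 1 X ×ˢ Finset.Icc 1 X).filter (fun z : ℕ × ℕ => z.1 < z.2) with hP
  have hmem : ∀ z ∈ P, (1 ≤ z.1 ∧ z.1 ≤ X) ∧ (1 ≤ z.2 ∧ z.2 ≤ X) ∧ z.1 < z.2 := by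
    intro z hz
    simp only [hP, Finset.mem_filter, Finset.mem_product, Finset.mem_Icc] at hz
    exact ⟨hz.1.1, hz.1.2, hz.2⟩
  have s1 : ∑ z ∈ P, GG 26 z.1 / (z.1 * z.2) ≤ Real.exp 52 * (1 + Real.log X) ^ 2 := by
    refine le_trans ?_ hprod
    apply sum_le_of_inj _ _ (fun z : ℕ × ℕ => (z.2, z.1))
    · intro z hz
      have := hmem z hz
      simp only [Finset.mem_product, Finset.mem_Icc]
      exact ⟨this.2.1, this.1⟩
    · rintro ⟨a, b⟩ _ ⟨a', b'⟩ _ h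
      simp only [Prod.mk.injEq] at h
      rw [h.1, h.2]
    · intro z _
      simp only
      rw [div_mul_div_comm, one_mul, mul_comm (z.1 : ℝ)]
    · intro z _; exact hnn z
  have s2 : ∑ z ∈ P, GG 26 z.2 / (z.1 * z.2) ≤ Real.exp 52 * (1 + Real.log X) ^ 2 := by
    refine le_trans ?_ hprod
    apply sum_le_of_inj _ _ id
    · intro z hz
      have := hmem z hz
      simp only [Finset.mem_product, Finset.mem_Icc]
      exact ⟨this.1, this.2.1⟩
    · intro a _ b _ h; exact h
    · intro z _
      simp only [id]
      rw [div_mul_div_comm, one_mul]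
    · intro z _; exact hnn z
  have s3 : ∑ z ∈ P, GG 26 (z.2 - z.1) / (z.1 * z.2) ≤ Real.exp 52 * (1 + Real.log X) ^ 2 := by
    refine le_trans ?_ hprod
    apply sum_le_of_inj _ _ (fun z : ℕ × ℕ => (z.1, z.2 - z.1))
    · intro z hz
      have := hmem z hz
      simp only [Finset.mem_product, Finset.mem_Icc]
      omega
    · rintro ⟨a, b⟩ hz ⟨a', b'⟩ hz' h
      have h1 := hmem _ hz
      have h2 := hmem _ hz'
      simp only [Prod.mk.injEq] at h h1 h2 ⊢
      omega
    · intro z hz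
      have h1 := hmem z hz
      simp only
      rw [div_mul_div_comm, one_mul]
      have ha : (0 : ℝ) < z.1 := by exact_mod_cast h1.1.1
      have hb : (0 : ℝ) < ((z.2 - z.1 : ℕ) : ℝ) := by
        have : 0 < z.2 - z.1 := by omega
        exact_mod_cast this
      apply div_le_div_of_nonneg_left (GG_nonneg _ _) (by positivity)
      apply mul_le_mul_of_nonneg_left _ ha.le
      exact_mod_cast Nat.sub_le _ _
    · intro z _; exact hnn z
  calc _ ≤ ∑ z ∈ P, (GG 26 z.1 / (z.1 * z.2) + GG 26 z.2 / (z.1 * z.2) +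
        GG 26 (z.2 - z.1) / (z.1 * z.2)) := by
        apply Finset.sum_le_sum
        intro z _
        rw [← add_div, ← add_div]
        apply div_le_div_of_nonneg_right _ (by positivity)
        have := three_mul_le _ _ _ (GG_nonneg 2 z.1) (GG_nonneg 2 z.2) (GG_nonneg 2 (z.2 - z.1))
        have h1 := GG_cube z.1
        have h2 := GG_cube z.2
        have h3 := GG_cube (z.2 - z.1)
        linarith
    _ ≤ _ := by
        rw [Finset.sum_add_distrib, Finset.sum_add_distrib]
        linarith

lemma Bone_card (X : ℕ) (hX : 2 ≤ X) :
    ((Bone X).card : ℝ) ≤ 32400 * (3 * Real.exp 52) * 9 * X := by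
  have hXr : (2 : ℝ) ≤ X := by exact_mod_cast hX
  have hlX : 0 < Real.log X := Real.log_pos (by linarith)
  have hlX2 : (1 : ℝ) / 2 ≤ Real.log X :=
    half_le_log_two.trans (Real.log_le_log (by norm_num) hXr)
  have key : ((Bone X).card : ℝ) * Real.log X ^ 2 ≤
      ∑ z ∈ (Finset.Icc 1 X ×ˢ Finset.Icc 1 X).filter (fun z => z.1 < z.2),
      32400 * X * (GG 2 z.1 * GG 2 z.2 * GG 2 (z.2 - z.1) / (z.1 * z.2)) := by
    rw [Bone, Finset.card_sigma, Nat.cast_sum, Finset.sum_mul]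
    apply Finset.sum_le_sum
    rintro ⟨a, b⟩ hz
    simp only [Finset.mem_filter, Finset.mem_product, Finset.mem_Icc] at hz
    simp only
    have hG : 0 ≤ GG 2 a * GG 2 b * GG 2 (b - a) :=
      mul_nonneg (mul_nonneg (GG_nonneg _ _) (GG_nonneg _ _)) (GG_nonneg _ _)
    set G := GG 2 a * GG 2 b * GG 2 (b - a) with hGdef
    rcases Finset.eq_empty_or_nonempty ((Finset.Icc 1 X).filter (fun d => a * b * d ≤ X ∧
      ((a * d + 1).Prime ∧ (b * d + 1).Prime) ∧ a ≤ d ∧ b ≤ d)) with h | ⟨d, hd⟩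
    · rw [h]; simp only [Finset.card_empty, Nat.cast_zero, zero_mul]
      positivity
    · simp only [Finset.mem_filter, Finset.mem_Icc] at hd
      obtain ⟨hN1, _, hlog⟩ := log_le_three X a b d _ (by omega) hz.1.1.1 hz.1.2.1 hd.2.2.2.1
        hd.2.2.2.2 hd.2.1 rfl
      have hs := sieve_two a b (X / (a * b)) hz.1.1.1 hz.2 hN1
      rw [← hGdef] at hs
      have hsub : ((Finset.Icc 1 X).filter (fun d => a * b * d ≤ X ∧
          ((a * d + 1).Prime ∧ (b * d + 1).Prime) ∧ a ≤ d ∧ b ≤ d)).card ≤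
          ((Finset.Icc 1 (X / (a * b))).filter
            (fun n => (a * n + 1).Prime ∧ (b * n + 1).Prime)).card := by
        apply Finset.card_le_card
        intro c hc
        simp only [Finset.mem_filter, Finset.mem_Icc] at hc ⊢
        obtain ⟨_, h2, _⟩ := log_le_three X a b c _ (by omega) hz.1.1.1 hz.1.2.1 hc.2.2.2.1
          hc.2.2.2.2 hc.2.1 rfl
        exact ⟨⟨hc.1.1, h2⟩, hc.2.2.1⟩
      have hNle : ((X / (a * b) : ℕ) : ℝ) ≤ (X : ℝ) / (a * b) := by
        have := @Nat.cast_div_le ℝ _ _ _ X (a * b)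
        push_cast at this
        exact this
      have hlog2 := pow_le_pow_left₀ hlX.le hlog 2
      calc _ ≤ (((Finset.Icc 1 (X / (a * b))).filter
            (fun n => (a * n + 1).Prime ∧ (b * n + 1).Prime)).card : ℝ) *
            (3 * Real.log (((X / (a * b) : ℕ) : ℝ) + 1)) ^ 2 :=
            mul_le_mul (Nat.cast_le.2 hsub) hlog2 (by positivity) (Nat.cast_nonneg _)
        _ = 9 * ((((Finset.Icc 1 (X / (a * b))).filter
            (fun n => (a * n + 1).Prime ∧ (b * n + 1).Prime)).card : ℝ) *
            Real.log (((X / (a * b) : ℕ) : ℝ) + 1) ^ 2) := by ring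
        _ ≤ 9 * (3600 * G * ((X / (a * b) : ℕ) : ℝ)) :=
            mul_le_mul_of_nonneg_left hs (by norm_num)
        _ ≤ 9 * (3600 * G * ((X : ℝ) / (a * b))) := by gcongr
        _ = _ := by ring
  rw [← Finset.mul_sum] at key
  have h2 : ((Bone X).card : ℝ) * Real.log X ^ 2 ≤
      (32400 * (3 * Real.exp 52) * 9 * X) * Real.log X ^ 2 := by
    calc _ ≤ _ := key
      _ ≤ 32400 * X * (3 * Real.exp 52 * (1 + Real.log X) ^ 2) :=
          mul_le_mul_of_nonneg_left (sum_triple X (by omega)) (by positivity)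
      _ ≤ 32400 * X * (3 * Real.exp 52 * (3 * Real.log X) ^ 2) := by
          gcongr
          linarith
      _ = _ := by ring
  exact le_of_mul_le_mul_right h2 (by positivity)

/-- ordered pairs -/
noncomputable def PP (X : ℕ) : Finset (ℕ × ℕ) :=
  (Finset.Icc 1 (X + 1) ×ˢ Finset.Icc 1 (X + 1)).filter
    (fun pq : ℕ × ℕ => pq.1.Prime ∧ pq.2.Prime ∧ Nat.lcm (pq.1 - 1) (pq.2 - 1) ≤ X)

lemma mem_PP_facts (X p q : ℕ) (h : (p, q) ∈ PP X) (hpq : p < q) :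
    ∃ d a b : ℕ, d = Nat.gcd (p - 1) (q - 1) ∧ a = (p - 1) / d ∧ b = (q - 1) / d ∧ 1 ≤ d ∧ 1 ≤ a ∧
      a < b ∧ d * a * b ≤ X ∧ p = d * a + 1 ∧ q = d * b + 1 ∧ p.Prime ∧ q.Prime ∧
      d ≤ X ∧ a ≤ X ∧ b ≤ X := by
  simp only [PP, Finset.mem_filter, Finset.mem_product, Finset.mem_Icc] at h
  obtain ⟨_, hp, hq, hl⟩ := h
  have hp2 := hp.two_le
  have hq2 := hq.two_le
  have hd : 0 < Nat.gcd (p - 1) (q - 1) := Nat.gcd_pos_of_pos_left _ (by omega)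
  have e1 := Nat.mul_div_cancel' (Nat.gcd_dvd_left (p - 1) (q - 1))
  have e2 := Nat.mul_div_cancel' (Nat.gcd_dvd_right (p - 1) (q - 1))
  have e3 := Nat.gcd_mul_lcm (p - 1) (q - 1)
  refine ⟨_, _, _, rfl, rfl, rfl, hd, ?_⟩
  generalize (p - 1) / Nat.gcd (p - 1) (q - 1) = a at *
  generalize (q - 1) / Nat.gcd (p - 1) (q - 1) = b at *
  generalize Nat.gcd (p - 1) (q - 1) = d at *
  have ha : 1 ≤ a := by
    rcases Nat.eq_zero_or_pos a with h | h
    · rw [h] at e1; omega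
    · exact h
  have hab : a < b := by
    by_contra hc
    have : d * b ≤ d * a := Nat.mul_le_mul_left _ (by omega)
    omega
  have hlcm : d * a * b = Nat.lcm (p - 1) (q - 1) := by
    apply Nat.eq_of_mul_eq_mul_left hd
    rw [e3]
    nth_rewrite 1 [← e1]
    rw [← e2]; ring
  have hX : d * a * b ≤ X := by rw [hlcm]; exact hl
  have hb : 1 ≤ b := by omega
  refine ⟨ha, hab, hX, by omega, by omega, hp, hq, ?_, ?_, ?_⟩
  · calc d ≤ d * (a * b) := Nat.le_mul_of_pos_right _ (Nat.mul_pos ha hb)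
      _ = d * a * b := by ring
      _ ≤ X := hX
  · calc a ≤ a * (d * b) := Nat.le_mul_of_pos_right _ (Nat.mul_pos hd hb)
      _ = d * a * b := by ring
      _ ≤ X := hX
  · calc b ≤ b * (d * a) := Nat.le_mul_of_pos_right _ (Nat.mul_pos hd ha)
      _ = d * a * b := by ring
      _ ≤ X := hX

lemma PP_lt_card (X : ℕ) :
    ((PP X).filter (fun z => z.1 < z.2)).card ≤ (Bone X).card + (Btwo X).card := by
  classical
  set g : ℕ × ℕ → ℕ := fun z => Nat.gcd (z.1 - 1) (z.2 - 1) with hg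
  rw [← Finset.card_filter_add_card_filter_not (s := (PP X).filter (fun z => z.1 < z.2))
    (fun z => (z.2 - 1) / g z ≤ g z)]
  apply Nat.add_le_add
  · apply Finset.card_le_card_of_injOn (fun z => (⟨((z.1 - 1) / g z, (z.2 - 1) / g z), g z⟩ :
      (_ : ℕ × ℕ) × ℕ))
    · rintro ⟨p, q⟩ hz
      simp only [Finset.mem_coe, Finset.mem_filter] at hz
      obtain ⟨⟨h1, h2⟩, h3⟩ := hz
      obtain ⟨d, a, b, hd, ha, hb, f1, f2, f3, f4, f5, f6, f7, f8, f9, f10, f11⟩ :=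
        mem_PP_facts X p q h1 h2
      simp only [hg] at h3 ⊢
      rw [← hd, ← hb] at h3
      rw [← hd, ← ha, ← hb]
      simp only [Bone, Finset.mem_coe, Finset.mem_sigma, Finset.mem_filter, Finset.mem_product,
        Finset.mem_Icc]
      refine ⟨⟨⟨⟨f2, f10⟩, by omega, f11⟩, f3⟩, ⟨f1, f9⟩, ?_, ⟨?_, ?_⟩, by omega, h3⟩
      · calc a * b * d = d * a * b := by ring
          _ ≤ X := f4
      · rw [mul_comm a d, ← f5]; exact f7
      · rw [mul_comm b d, ← f6]; exact f8
    · rintro ⟨p, q⟩ hz ⟨p', q'⟩ hz' h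
      simp only [Finset.mem_coe, Finset.mem_filter] at hz hz'
      obtain ⟨d, a, b, hd, ha, hb, _, _, _, _, f5, f6, _⟩ := mem_PP_facts X p q hz.1.1 hz.1.2
      obtain ⟨d', a', b', hd', ha', hb', _, _, _, _, f5', f6', _⟩ :=
        mem_PP_facts X p' q' hz'.1.1 hz'.1.2
      simp only [hg, Sigma.mk.injEq, Prod.mk.injEq, heq_eq_eq] at h
      rw [← hd, ← hd', ← ha, ← ha', ← hb, ← hb'] at h
      rw [f5, f6, f5', f6', h.1.1, h.1.2, h.2]
  · apply Finset.card_le_card_of_injOn (fun z => (⟨(g z, (z.1 - 1) / g z), (z.2 - 1) / g z⟩ :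
      (_ : ℕ × ℕ) × ℕ))
    · rintro ⟨p, q⟩ hz
      simp only [Finset.mem_coe, Finset.mem_filter] at hz
      obtain ⟨⟨h1, h2⟩, h3⟩ := hz
      obtain ⟨d, a, b, hd, ha, hb, f1, f2, f3, f4, f5, f6, f7, f8, f9, f10, f11⟩ :=
        mem_PP_facts X p q h1 h2
      simp only [hg] at h3 ⊢
      rw [← hd, ← hb] at h3
      rw [← hd, ← ha, ← hb]
      simp only [Btwo, Finset.mem_coe, Finset.mem_sigma, Finset.mem_filter, Finset.mem_product,
        Finset.mem_Icc]
      refine ⟨⟨⟨⟨f1, f9⟩, f2, f10⟩, ?_⟩, ⟨by omega, f11⟩, f4, ?_, by omega, f3.le⟩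
      · rw [← f5]; exact f7
      · rw [← f6]; exact f8
    · rintro ⟨p, q⟩ hz ⟨p', q'⟩ hz' h
      simp only [Finset.mem_coe, Finset.mem_filter] at hz hz'
      obtain ⟨d, a, b, hd, ha, hb, _, _, _, _, f5, f6, _⟩ := mem_PP_facts X p q hz.1.1 hz.1.2
      obtain ⟨d', a', b', hd', ha', hb', _, _, _, _, f5', f6', _⟩ :=
        mem_PP_facts X p' q' hz'.1.1 hz'.1.2
      simp only [hg, Sigma.mk.injEq, Prod.mk.injEq, heq_eq_eq] at h
      rw [← hd, ← hd', ← ha, ← ha', ← hb, ← hb'] at h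
      rw [f5, f6, f5', f6', h.1.1, h.1.2, h.2]

lemma PP_card (X : ℕ) : (PP X).card ≤ 2 * ((Bone X).card + (Btwo X).card) + (X + 1) := by
  classical
  have h1 := PP_lt_card X
  have h2 : ((PP X).filter (fun z => z.2 < z.1)).card ≤
      ((PP X).filter (fun z => z.1 < z.2)).card := by
    apply Finset.card_le_card_of_injOn Prod.swap
    · rintro ⟨p, q⟩ hz
      simp only [PP, Finset.mem_coe, Finset.mem_filter, Finset.mem_product, Prod.swap] at hz ⊢
      obtain ⟨⟨⟨a1, a2⟩, a3, a4, a5⟩, a6⟩ := hz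
      exact ⟨⟨⟨a2, a1⟩, a4, a3, by rw [Nat.lcm_comm]; exact a5⟩, a6⟩
    · exact Prod.swap_injective.injOn
  have h3 : ((PP X).filter (fun z => z.1 = z.2)).card ≤ X + 1 := by
    have : ((PP X).filter (fun z => z.1 = z.2)).card ≤ (Finset.Icc 1 (X + 1)).card := by
      apply Finset.card_le_card_of_injOn Prod.fst
      · rintro ⟨p, q⟩ hz
        simp only [PP, Finset.mem_coe, Finset.mem_filter, Finset.mem_product] at hz ⊢
        exact hz.1.1.1
      · rintro ⟨p, q⟩ hz ⟨p', q'⟩ hz' h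
        simp only [Finset.mem_coe, Finset.mem_filter] at hz hz' h
        rw [Prod.mk.injEq]
        exact ⟨h, by rw [← hz.2, ← hz'.2, h]⟩
    rw [Nat.card_Icc] at this
    omega
  have h4 : PP X ⊆ ((PP X).filter (fun z => z.1 < z.2) ∪ (PP X).filter (fun z => z.2 < z.1)) ∪
      (PP X).filter (fun z => z.1 = z.2) := by
    intro z hz
    simp only [Finset.mem_union, Finset.mem_filter]
    rcases lt_trichotomy z.1 z.2 with h | h | h
    · exact Or.inl (Or.inl ⟨hz, h⟩)
    · exact Or.inr ⟨hz, h⟩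
    · exact Or.inl (Or.inr ⟨hz, h⟩)
  have h5 := Finset.card_le_card h4
  have h6 := Finset.card_union_le
    ((PP X).filter (fun z => z.1 < z.2) ∪ (PP X).filter (fun z => z.2 < z.1))
    ((PP X).filter (fun z => z.1 = z.2))
  have h7 := Finset.card_union_le
    ((PP X).filter (fun z => z.1 < z.2)) ((PP X).filter (fun z => z.2 < z.1))
  omega

theorem S2_upper_bound :
    ∃ C : ℝ, C > 0 ∧ ∀ x : ℝ, x ≥ 2 →
      (((Finset.Icc 1 (⌊x⌋₊ + 1) ×ˢ Finset.Icc 1 (⌊x⌋₊ + 1)).filter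
          (fun pq : ℕ × ℕ => pq.1.Prime ∧ pq.2.Prime ∧
            (Nat.lcm (pq.1 - 1) (pq.2 - 1) : ℝ) ≤ x)).card : ℝ)
        ≤ C * x := by
  refine ⟨2 * (32400 * (3 * Real.exp 52) * 9 +
    10800 * (57600 * Real.exp 2 * Real.exp 4) * 4) + 2, by positivity, ?_⟩
  intro x hx
  have hX : 2 ≤ ⌊x⌋₊ := Nat.le_floor (by exact_mod_cast hx)
  have hXx : (⌊x⌋₊ : ℝ) ≤ x := Nat.floor_le (by linarith)
  set X := ⌊x⌋₊ with hXdef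
  have hsub : ((Finset.Icc 1 (X + 1) ×ˢ Finset.Icc 1 (X + 1)).filter
          (fun pq : ℕ × ℕ => pq.1.Prime ∧ pq.2.Prime ∧
            (Nat.lcm (pq.1 - 1) (pq.2 - 1) : ℝ) ≤ x)).card ≤ (PP X).card := by
    apply Finset.card_le_card
    intro z hz
    simp only [PP, Finset.mem_filter] at hz ⊢
    exact ⟨hz.1, hz.2.1, hz.2.2.1, Nat.le_floor hz.2.2.2⟩
  have h1 := Bone_card X hX
  have h2 := Btwo_card X hX
  have h3 : ((PP X).card : ℝ) ≤ 2 * ((Bone X).card + (Btwo X).card) + (X + 1) := by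
    exact_mod_cast PP_card X
  have hX1 : (1 : ℝ) ≤ X := by exact_mod_cast (by omega : 1 ≤ X)
  have h4 : ((PP X).card : ℝ) ≤ (2 * (32400 * (3 * Real.exp 52) * 9 +
    10800 * (57600 * Real.exp 2 * Real.exp 4) * 4) + 2) * X := by linarith
  calc _ ≤ ((PP X).card : ℝ) := by exact_mod_cast hsub
    _ ≤ _ := h4
    _ ≤ _ := mul_le_mul_of_nonneg_left hXx (by positivity)
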